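/- arXiv:math/0602337 — 4 statements merged into one kernel-verified Lean document; each statement's English description precedes it below -/
import Mathlib

section
/- Let u(y,t) = ∫_{ℝⁿ} K(y,z,t) u₀(z) dz, where K is the Euclidean heat kernel on ℝⁿ and u₀ : ℝⁿ → ℝ is continuous, compactly supported, nonnegative, and not identically zero, and set A = sup u₀. Then for every y ∈ ℝⁿ and every t ∈ (0,1], one has t ‖∇u(y,t)‖² / u(y,t)² ≤ (1+t) log( A / u(y,t) ). -/
open Real MeasureTheory Filter Set

/-- The Euclidean heat kernel on ℝⁿ. -/
noncomputable def heatK (n : ℕ) (x y : EuclideanSpace ℝ (Fin n)) (t : ℝ) : ℝ :=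
  (4 * π * t) ^ (-(n : ℝ) / 2) * Real.exp (-‖x - y‖ ^ 2 / (4 * t))

/-!
The Gaussian kernel satisfies `K(y + h, z, t) = exp (-‖h‖² / 4t) K(y, z, t) exp (⟪z - y, h⟫ / 2t)`
and `∇K(y, z, t) = K(y, z, t) (z - y) / 2t`. Jensen's inequality for `exp`, with respect to the
weight `K(y, ·, t) u₀`, therefore gives the Harnack-type lower bound
`u(y, t) exp (⟪∇u(y, t), h⟫ / u(y, t) - ‖h‖² / 4t) ≤ u(y + h, t)`.
The right-hand side is at most `A`, and the choice `h = 2t ∇u / u` maximises the exponent, whose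
value there is `t ‖∇u‖² / u²`.
-/

open scoped ENNReal Topology InnerProductSpace

section Integral

variable {α : Type*} [MeasurableSpace α] {μ : Measure α}

theorem integral_mul_exp_average_le {w g : α → ℝ} (hw : 0 ≤ᵐ[μ] w) (hwi : Integrable w μ)
    (hwg : Integrable (fun a => w a * g a) μ) (hwexp : Integrable (fun a => w a * exp (g a)) μ)
    (hpos : 0 < ∫ a, w a ∂μ) :
    (∫ a, w a ∂μ) * exp ((∫ a, w a * g a ∂μ) / ∫ a, w a ∂μ) ≤ ∫ a, w a * exp (g a) ∂μ := by
  set m := (∫ a, w a * g a ∂μ) / ∫ a, w a ∂μ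
  have tangent (a : α) : exp m * (1 + (g a - m)) ≤ exp (g a) := by
    calc exp m * (1 + (g a - m)) ≤ exp m * exp (g a - m) := by
          gcongr
          linarith [add_one_le_exp (g a - m)]
      _ = exp (g a) := by rw [← exp_add]; ring_nf
  calc (∫ a, w a ∂μ) * exp m
      = ∫ a, exp m * ((1 - m) * w a + w a * g a) ∂μ := by
        rw [integral_const_mul, integral_add (hwi.const_mul _) hwg, integral_const_mul]
        have : m * ∫ a, w a ∂μ = ∫ a, w a * g a ∂μ := div_mul_cancel₀ _ hpos.ne'
        linear_combination exp m * this
    _ ≤ ∫ a, w a * exp (g a) ∂μ := by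
        refine integral_mono_ae (((hwi.const_mul _).add hwg).const_mul _) hwexp ?_
        filter_upwards [hw] with a ha
        linarith [mul_le_mul_of_nonneg_left (tangent a) ha]

theorem integrable_and_hasGradientAt_integral_of_dominated_of_gradient_le {E : Type*}
    [NormedAddCommGroup E] [InnerProductSpace ℝ E] [CompleteSpace E] {F : E → α → ℝ}
    {G : E → α → E} {bound : α → ℝ} {x₀ : E} {s : Set E} (hs : s ∈ 𝓝 x₀)
    (hF_meas : ∀ᶠ x in 𝓝 x₀, AEStronglyMeasurable (F x) μ)
    (hF_int : Integrable (F x₀) μ) (hG_meas : AEStronglyMeasurable (G x₀) μ)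
    (h_bound : ∀ᵐ a ∂μ, ∀ x ∈ s, ‖G x a‖ ≤ bound a) (bound_integrable : Integrable bound μ)
    (h_diff : ∀ᵐ a ∂μ, ∀ x ∈ s, HasGradientAt (F · a) (G x a) x) :
    Integrable (G x₀) μ ∧ HasGradientAt (fun x => ∫ a, F x a ∂μ) (∫ a, G x₀ a ∂μ) x₀ := by
  have hG_int : Integrable (G x₀) μ := bound_integrable.mono' hG_meas
    (h_bound.mono fun a ha => ha x₀ (mem_of_mem_nhds hs))
  have dual_integral : ∫ a, innerSL ℝ (G x₀ a) ∂μ = innerSL ℝ (∫ a, G x₀ a ∂μ) :=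
    (innerSL ℝ).integral_comp_comm hG_int
  refine ⟨hG_int, hasGradientAt_iff_hasFDerivAt.2 ?_⟩
  have := hasFDerivAt_integral_of_dominated_of_fderiv_le (F' := fun x a => innerSL ℝ (G x a))
    hs hF_meas hF_int ((innerSL ℝ).continuous.comp_aestronglyMeasurable hG_meas)
    (h_bound.mono fun a ha x hx => (innerSL_apply_norm ℝ (G x a)).trans_le (ha x hx))
    bound_integrable (h_diff.mono fun a ha x hx => (ha x hx).hasFDerivAt)
  rwa [dual_integral] at this

end Integral

section HeatKernel

variable {n : ℕ} {t : ℝ} (x y z h : EuclideanSpace ℝ (Fin n))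

theorem heatK_pos (ht : 0 < t) : 0 < heatK n y z t := by
  unfold heatK
  positivity

@[fun_prop]
theorem continuous_heatK : Continuous (fun z => heatK n y z t) := by
  unfold heatK
  fun_prop

theorem integral_heatK (ht : 0 < t) : ∫ z, heatK n y z t = 1 := by
  calc ∫ z, heatK n y z t
      = (4 * π * t) ^ (-(n : ℝ) / 2) * ∫ z : EuclideanSpace ℝ (Fin n),
          exp (-(1 / (4 * t)) * ‖y - z‖ ^ 2) := by
        unfold heatK
        rw [integral_const_mul]
        congr! 4
        ring
    _ = (4 * π * t) ^ (-(n : ℝ) / 2) * (π / (1 / (4 * t))) ^ ((n : ℝ) / 2) := by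
        rw [integral_sub_left_eq_self (fun z => exp (-(1 / (4 * t)) * ‖z‖ ^ 2)),
          GaussianFourier.integral_rexp_neg_mul_sq_norm (by positivity),
          finrank_euclideanSpace_fin]
    _ = 1 := by
        rw [show π / (1 / (4 * t)) = 4 * π * t by field_simp, ← rpow_add (by positivity),
          neg_div, neg_add_cancel, rpow_zero]

theorem integrable_heatK (ht : 0 < t) : Integrable (fun z => heatK n y z t) :=
  integrable_of_integral_eq_one (integral_heatK y ht)

theorem heatK_add_left :
    heatK n (y + h) z t = exp (-(‖h‖ ^ 2 / (4 * t))) *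
      (heatK n y z t * exp (⟪z - y, h⟫_ℝ / (2 * t))) := by
  have expand : ‖y + h - z‖ ^ 2 = ‖y - z‖ ^ 2 - 2 * ⟪z - y, h⟫_ℝ + ‖h‖ ^ 2 := by
    rw [add_sub_right_comm, norm_add_sq_real, ← neg_sub z y, inner_neg_left]
    ring
  unfold heatK
  rw [mul_assoc _ (exp _) (exp _), ← exp_add, mul_left_comm, ← exp_add, expand]
  ring_nf

theorem integrable_heatK_mul_exp_norm (ht : 0 < t) (c : ℝ) :
    Integrable (fun z => heatK n y z t * exp (c * ‖z - y‖)) := by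
  set d : ℝ → ℝ := fun s => (4 * π * s) ^ (-(n : ℝ) / 2)
  have hd_ne : d (2 * t) ≠ 0 := by positivity
  refine ((integrable_heatK y (by positivity : 0 < 2 * t)).const_mul
    (d t / d (2 * t) * exp (2 * t * c ^ 2))).mono' (by fun_prop) (ae_of_all _ fun z => ?_)
  have exponent_le : -‖y - z‖ ^ 2 / (4 * t) + c * ‖z - y‖
      ≤ 2 * t * c ^ 2 + -‖y - z‖ ^ 2 / (4 * (2 * t)) := by
    rw [norm_sub_rev z y, ← sub_nonneg]
    have : 0 ≤ (‖y - z‖ - 4 * t * c) ^ 2 / (8 * t) := by positivity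
    convert this using 1
    field_simp
    ring
  calc ‖heatK n y z t * exp (c * ‖z - y‖)‖
      = d t * exp (-‖y - z‖ ^ 2 / (4 * t) + c * ‖z - y‖) := by
        rw [norm_of_nonneg (mul_nonneg (heatK_pos y z ht).le (exp_nonneg _)), exp_add, ← mul_assoc]
        rfl
    _ ≤ d t * exp (2 * t * c ^ 2 + -‖y - z‖ ^ 2 / (4 * (2 * t))) := by
        have : 0 ≤ d t := by positivity
        gcongr
    _ = d t / d (2 * t) * exp (2 * t * c ^ 2) *
          (d (2 * t) * exp (-‖y - z‖ ^ 2 / (4 * (2 * t)))) := by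
        rw [exp_add]
        field_simp

theorem hasGradientAt_heatK :
    HasGradientAt (fun x => heatK n x z t) (heatK n x z t • (2 * t)⁻¹ • (z - x)) x := by
  have hderiv := ((((hasFDerivAt_id x).sub_const z).norm_sq.neg.mul_const (4 * t)⁻¹).exp.const_mul
    ((4 * π * t) ^ (-(n : ℝ) / 2)))
  rw [hasGradientAt_iff_hasFDerivAt]
  refine hderiv.congr_fderiv ?_
  ext v
  simp only [heatK, div_eq_mul_inv, Pi.neg_apply, id_eq, ContinuousLinearMap.comp_id, smul_neg,
    neg_apply, smul_apply, sub_apply, map_sub, map_smul, coe_innerSL_apply, nsmul_eq_mul,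
    smul_eq_mul, Nat.cast_ofNat, InnerProductSpace.toDual_apply_apply]
  ring

theorem heatK_le_mul_exp_norm (ht : 0 < t) :
    heatK n x z t ≤ heatK n y z t * exp (‖z - y‖ * ‖x - y‖ / (2 * t)) := by
  have hK := (heatK_pos y z ht).le
  calc heatK n x z t = exp (-(‖x - y‖ ^ 2 / (4 * t))) *
        (heatK n y z t * exp (⟪z - y, x - y⟫_ℝ / (2 * t))) := by
        rw [← heatK_add_left, add_sub_cancel]
    _ ≤ 1 * (heatK n y z t * exp (‖z - y‖ * ‖x - y‖ / (2 * t))) := by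
        gcongr
        · exact exp_le_one_iff.2 (neg_nonpos.2 (by positivity))
        · exact real_inner_le_norm _ _
    _ = heatK n y z t * exp (‖z - y‖ * ‖x - y‖ / (2 * t)) := one_mul _

theorem norm_gradient_heatK_le (ht : 0 < t) (hxy : ‖x - y‖ ≤ 1) :
    ‖heatK n x z t • (2 * t)⁻¹ • (z - x)‖
      ≤ (2 * t)⁻¹ * (heatK n y z t * exp ((1 + (2 * t)⁻¹) * ‖z - y‖)) := by
  have hK := (heatK_pos y z ht).le
  have dist_le : ‖z - x‖ ≤ exp ‖z - y‖ := by
    linarith [norm_sub_le_norm_sub_add_norm_sub z y x, norm_sub_rev x y, add_one_le_exp ‖z - y‖]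
  calc ‖heatK n x z t • (2 * t)⁻¹ • (z - x)‖
      = heatK n x z t * ((2 * t)⁻¹ * ‖z - x‖) := by
        rw [norm_smul, norm_smul, norm_of_nonneg (heatK_pos x z ht).le,
          norm_of_nonneg (by positivity)]
    _ ≤ heatK n y z t * exp (‖z - y‖ * ‖x - y‖ / (2 * t)) * ((2 * t)⁻¹ * exp ‖z - y‖) := by
        gcongr
        exact heatK_le_mul_exp_norm x y z ht
    _ ≤ heatK n y z t * exp (‖z - y‖ * 1 / (2 * t)) * ((2 * t)⁻¹ * exp ‖z - y‖) := by
        gcongr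
    _ = (2 * t)⁻¹ * (heatK n y z t * exp ((1 + (2 * t)⁻¹) * ‖z - y‖)) := by
        rw [add_mul, exp_add, one_mul, mul_one, div_eq_inv_mul]
        ring

end HeatKernel

/-- The solution `u(y, t) = ∫ K(y, z, t) f(z) dz` of the heat equation on `ℝⁿ` with initial
data `f`. -/
noncomputable def heatSolution {n : ℕ} (f : EuclideanSpace ℝ (Fin n) → ℝ)
    (y : EuclideanSpace ℝ (Fin n)) (t : ℝ) : ℝ :=
  ∫ z, heatK n y z t * f z

section HeatSolution

variable {n : ℕ} {t : ℝ} {f : EuclideanSpace ℝ (Fin n) → ℝ} (y h : EuclideanSpace ℝ (Fin n))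

theorem integrable_heatK_mul (ht : 0 < t) (hf : MemLp f ∞) :
    Integrable (fun z => heatK n y z t * f z) :=
  (integrable_heatK y ht).mul_of_top_left hf

theorem heatSolution_le (ht : 0 < t) (hf : MemLp f ∞) {A : ℝ} (hA : ∀ᵐ z, f z ≤ A) :
    heatSolution f y t ≤ A := by
  calc heatSolution f y t ≤ ∫ z, heatK n y z t * A := by
        refine integral_mono_ae (integrable_heatK_mul y ht hf)
          ((integrable_heatK y ht).mul_const A) ?_
        filter_upwards [hA] with z hz
        exact mul_le_mul_of_nonneg_left hz (heatK_pos y z ht).le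
    _ = A := by rw [integral_mul_const, integral_heatK y ht, one_mul]

theorem heatSolution_pos (ht : 0 < t) (hf : MemLp f ∞) (hnn : ∀ᵐ z, 0 ≤ f z)
    (hne : ¬ f =ᵐ[volume] 0) : 0 < heatSolution f y t := by
  have integrand_nonneg : 0 ≤ᵐ[volume] fun z => heatK n y z t * f z :=
    hnn.mono fun z hz => mul_nonneg (heatK_pos y z ht).le hz
  refine (integral_nonneg_of_ae integrand_nonneg).lt_of_ne' fun h0 => hne ?_
  have := (integral_eq_zero_iff_of_nonneg_ae integrand_nonneg (integrable_heatK_mul y ht hf)).1 h0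
  exact this.mono fun z hz => (mul_eq_zero.1 hz).resolve_left (heatK_pos y z ht).ne'

theorem integrable_and_hasGradientAt_heatSolution (ht : 0 < t) (hf : MemLp f ∞) :
    Integrable (fun z => (heatK n y z t * f z) • (2 * t)⁻¹ • (z - y)) ∧
      HasGradientAt (fun x => heatSolution f x t)
        (∫ z, (heatK n y z t * f z) • (2 * t)⁻¹ • (z - y)) y := by
  refine integrable_and_hasGradientAt_integral_of_dominated_of_gradient_le
    (G := fun x z => (heatK n x z t * f z) • (2 * t)⁻¹ • (z - x))
    (Metric.closedBall_mem_nhds y one_pos)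
    (Eventually.of_forall fun x => (integrable_heatK_mul x ht hf).aestronglyMeasurable)
    (integrable_heatK_mul y ht hf)
    ((integrable_heatK_mul y ht hf).aestronglyMeasurable.smul (by fun_prop))
    (ae_of_all _ fun z x hx => ?_)
    (((integrable_heatK_mul_exp_norm y ht (1 + (2 * t)⁻¹)).const_mul (2 * t)⁻¹).mul_of_top_left
      hf.norm)
    (ae_of_all _ fun z x _ => ?_)
  · rw [mul_comm, mul_smul, norm_smul, mul_comm]
    refine mul_le_mul_of_nonneg_right ?_ (norm_nonneg (f z))
    exact norm_gradient_heatK_le x y z ht (mem_closedBall_iff_norm.1 hx)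
  · rw [hasGradientAt_iff_hasFDerivAt, mul_comm, mul_smul, map_smul]
    exact (hasGradientAt_heatK x z).hasFDerivAt.mul_const (f z)

theorem integrable_heatK_mul_inner (ht : 0 < t) (hf : MemLp f ∞) :
    Integrable (fun z => heatK n y z t * f z * (⟪z - y, h⟫_ℝ / (2 * t))) := by
  simpa only [real_inner_smul_left, inv_mul_eq_div] using
    (integrable_and_hasGradientAt_heatSolution y ht hf).1.inner_const (𝕜 := ℝ) h

theorem inner_gradient_heatSolution (ht : 0 < t) (hf : MemLp f ∞) :
    ⟪gradient (fun x => heatSolution f x t) y, h⟫_ℝ =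
      ∫ z, heatK n y z t * f z * (⟪z - y, h⟫_ℝ / (2 * t)) := by
  obtain ⟨gradient_integrable, hgrad⟩ := integrable_and_hasGradientAt_heatSolution y ht hf
  rw [hgrad.gradient, real_inner_comm, ← integral_inner gradient_integrable]
  simp only [real_inner_comm _ h, real_inner_smul_left, inv_mul_eq_div]

theorem integrable_heatK_mul_exp_inner (ht : 0 < t) (hf : MemLp f ∞) :
    Integrable (fun z => heatK n y z t * f z * exp (⟪z - y, h⟫_ℝ / (2 * t))) := by
  have translated := integrable_heatK_mul (y + h) ht hf
  simp only [heatK_add_left, mul_assoc] at translated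
  rw [integrable_const_mul_iff (exp_ne_zero _).isUnit] at translated
  simpa only [mul_assoc, mul_comm (f _)] using translated

theorem heatSolution_add :
    heatSolution f (y + h) t = exp (-(‖h‖ ^ 2 / (4 * t))) *
      ∫ z, heatK n y z t * f z * exp (⟪z - y, h⟫_ℝ / (2 * t)) := by
  simp only [heatSolution, heatK_add_left, mul_assoc, integral_const_mul, mul_comm (f _)]

theorem heatSolution_mul_exp_le (ht : 0 < t) (hf : MemLp f ∞) (hnn : ∀ᵐ z, 0 ≤ f z)
    (hpos : 0 < heatSolution f y t) :
    heatSolution f y t * exp (⟪gradient (fun x => heatSolution f x t) y, h⟫_ℝ / heatSolution f y t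
      - ‖h‖ ^ 2 / (4 * t)) ≤ heatSolution f (y + h) t := by
  have jensen := integral_mul_exp_average_le
    (hnn.mono fun z hz => mul_nonneg (heatK_pos y z ht).le hz) (integrable_heatK_mul y ht hf)
    (integrable_heatK_mul_inner y h ht hf) (integrable_heatK_mul_exp_inner y h ht hf) hpos
  rw [← inner_gradient_heatSolution y h ht hf] at jensen
  rw [heatSolution_add, sub_eq_neg_add, exp_add, mul_left_comm]
  gcongr
  exact jensen

end HeatSolution

theorem stmt2_general {n : ℕ} {u₀ : EuclideanSpace ℝ (Fin n) → ℝ} {A : ℝ}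
    (hm : AEStronglyMeasurable u₀) (hnn : ∀ᵐ z, 0 ≤ u₀ z) (hA : ∀ᵐ z, u₀ z ≤ A)
    (hne : ¬ u₀ =ᵐ[volume] 0) {t : ℝ} (ht : 0 < t) (y : EuclideanSpace ℝ (Fin n)) :
    t * ‖gradient (fun x => heatSolution u₀ x t) y‖ ^ 2 / heatSolution u₀ y t ^ 2
      ≤ log (A / heatSolution u₀ y t) := by
  have hu₀ : MemLp u₀ ∞ := memLp_top_of_bound hm A <| by
    filter_upwards [hnn, hA] with z hz hzA
    rwa [norm_of_nonneg hz]
  have hpos := heatSolution_pos y ht hu₀ hnn hne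
  set u := heatSolution u₀ y t
  set G := gradient (fun x => heatSolution u₀ x t) y
  have exponent_eq : ⟪G, (2 * t / u) • G⟫_ℝ / u - ‖(2 * t / u) • G‖ ^ 2 / (4 * t)
      = t * ‖G‖ ^ 2 / u ^ 2 := by
    rw [real_inner_smul_right, real_inner_self_eq_norm_sq, norm_smul, mul_pow, norm_eq_abs, sq_abs]
    field_simp
    ring
  have harnack : u * exp (t * ‖G‖ ^ 2 / u ^ 2) ≤ A := by
    rw [← exponent_eq]
    exact (heatSolution_mul_exp_le y _ ht hu₀ hnn hpos).trans (heatSolution_le _ ht hu₀ hA)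
  have hApos : 0 < A := (by positivity : 0 < u * exp (t * ‖G‖ ^ 2 / u ^ 2)).trans_le harnack
  rwa [le_log_iff_exp_le (by positivity), le_div_iff₀' hpos]

/-- Flat-space Hamilton-type gradient estimate (Lemma 2(i) of the paper with
`k₁ = k₂ = 0`): for the bounded positive solution `u` of the heat equation with
initial data `u₀` and `A = sup u₀`, one has
`t ‖∇u‖²/u² ≤ (1+t) log(A/u)` for `0 < t ≤ 1`. -/
theorem stmt2 (n : ℕ) (hn : 1 ≤ n)
    (u₀ : EuclideanSpace ℝ (Fin n) → ℝ) (hc : Continuous u₀)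
    (hsupp : HasCompactSupport u₀) (hnn : ∀ z, 0 ≤ u₀ z) (hne : ∃ z, u₀ z ≠ 0)
    (u : EuclideanSpace ℝ (Fin n) → ℝ → ℝ)
    (hu : ∀ y t, u y t = ∫ z, heatK n y z t * u₀ z)
    (A : ℝ) (hA : A = sSup (Set.range u₀)) :
    ∀ (y : EuclideanSpace ℝ (Fin n)), ∀ t ∈ Set.Ioc (0 : ℝ) 1,
      t * ‖gradient (fun z => u z t) y‖ ^ 2 / (u y t) ^ 2
        ≤ (1 + t) * Real.log (A / u y t) := by
  rintro y t ⟨ht, -⟩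
  obtain rfl : u = heatSolution u₀ := funext₂ hu
  have hle (z) : u₀ z ≤ A := hA ▸ le_csSup (hc.bddAbove_range_of_hasCompactSupport hsupp) ⟨z, rfl⟩
  have hne' : ¬ u₀ =ᵐ[volume] 0 := by
    rwa [hc.ae_eq_iff_eq volume continuous_zero, funext_iff, not_forall]
  have sharp := stmt2_general hc.aestronglyMeasurable (ae_of_all _ hnn) (ae_of_all _ hle) hne' ht y
  have lhs_nonneg : 0 ≤ t * ‖gradient (fun z => heatSolution u₀ z t) y‖ ^ 2
      / heatSolution u₀ y t ^ 2 := by positivity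
  exact sharp.trans (le_mul_of_one_le_left (lhs_nonneg.trans sharp) (by linarith))
end

section
/- Let u(y,t) = ∫_{ℝⁿ} K(y,z,t) u₀(z) dz, where K is the Euclidean heat kernel on ℝⁿ and u₀ : ℝⁿ → ℝ is continuous, compactly supported, nonnegative, and not identically zero, and set m = ∫_{ℝⁿ} u₀(z) dz. Then for every y ∈ ℝⁿ and every t ∈ (0,1], one has t ‖∇u(y,t)‖² / u(y,t)² ≤ (2+t) log( m / ( (2πt)^{n/2} u(y,t) ) ). -/
open Real MeasureTheory Filter Set

/-! Let `ν` be the probability measure proportional to `exp (-‖y - z‖² / (4t)) u₀(z) dz`.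
Differentiating under the integral sign gives `∇u(y) / u(y) = E_ν[z - y] / (2t)`, while
`E_ν[exp (‖z - y‖² / (4t))] = m / ((4πt)^(n/2) u(y))` because the two Gaussian factors cancel.
Jensen's inequality for the convex function `v ↦ exp (‖v‖² / (4t))` therefore yields
`t ‖∇u‖² / u² = ‖E_ν[z - y]‖² / (4t) ≤ log (m / ((4πt)^(n/2) u))`, with equality when the initial
data is a Dirac mass. -/

section Preliminaries

variable {α E : Type*} [MeasurableSpace α] {μ : Measure α}

theorem hasGradientAt_integral_of_dominated_of_gradient_le
    [NormedAddCommGroup E] [InnerProductSpace ℝ E] [CompleteSpace E]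
    {F : E → α → ℝ} {F' : E → α → E} {bound : α → ℝ} {s : Set E} {x₀ : E} (hs : s ∈ nhds x₀)
    (hF_meas : ∀ᶠ x in nhds x₀, AEStronglyMeasurable (F x) μ) (hF_int : Integrable (F x₀) μ)
    (hF'_meas : AEStronglyMeasurable (F' x₀) μ)
    (h_bound : ∀ᵐ a ∂μ, ∀ x ∈ s, ‖F' x a‖ ≤ bound a) (bound_integrable : Integrable bound μ)
    (h_diff : ∀ᵐ a ∂μ, ∀ x ∈ s, HasGradientAt (F · a) (F' x a) x) :
    HasGradientAt (fun x => ∫ a, F x a ∂μ) (∫ a, F' x₀ a ∂μ) x₀ := by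
  let dual := InnerProductSpace.toDual ℝ E
  have hdual : dual (∫ a, F' x₀ a ∂μ) = ∫ a, dual (F' x₀ a) ∂μ :=
    (dual.toContinuousLinearEquiv.integral_comp_comm _).symm
  rw [hasGradientAt_iff_hasFDerivAt, hdual]
  refine hasFDerivAt_integral_of_dominated_of_fderiv_le (F' := fun x a => dual (F' x a)) hs
    hF_meas hF_int (dual.continuous.comp_aestronglyMeasurable hF'_meas) ?_ bound_integrable h_diff
  simpa only [dual.norm_map] using h_bound

theorem convexOn_exp_norm_sq_div [NormedAddCommGroup E] [NormedSpace ℝ E] {c : ℝ} (hc : 0 ≤ c) :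
    ConvexOn ℝ univ fun v : E => exp (‖v‖ ^ 2 / c) := by
  have hsq : ConvexOn ℝ univ fun v : E => ‖v‖ ^ 2 / c := by
    simpa only [div_eq_inv_mul] using!
      (convexOn_univ_norm.pow (fun v _ => norm_nonneg v) 2).smul (inv_nonneg.2 hc)
  have himage : Convex ℝ ((fun v : E => ‖v‖ ^ 2 / c) '' univ) :=
    (isPreconnected_univ.image _ (by fun_prop)).ordConnected.convex
  exact (convexOn_exp.subset (subset_univ _) himage).comp hsq (exp_monotone.monotoneOn _)

theorem exp_norm_integral_sq_div_le_integral
    [NormedAddCommGroup E] [NormedSpace ℝ E] [CompleteSpace E] [IsProbabilityMeasure μ]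
    {f : α → E} {c : ℝ} (hc : 0 ≤ c) (hf : Integrable f μ)
    (hexp : Integrable (fun a => exp (‖f a‖ ^ 2 / c)) μ) :
    exp (‖∫ a, f a ∂μ‖ ^ 2 / c) ≤ ∫ a, exp (‖f a‖ ^ 2 / c) ∂μ :=
  (convexOn_exp_norm_sq_div hc).map_integral_le (by fun_prop) isClosed_univ (by simp) hf hexp

theorem exists_measure_integral_eq_integral_mul {f : α → ℝ} (hf : 0 ≤ᵐ[μ] f)
    (hpos : 0 < ∫ a, f a ∂μ) :
    ∃ ν : Measure α, IsFiniteMeasure ν ∧ NeZero ν ∧ ν.real univ = ∫ a, f a ∂μ ∧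
      ∀ g : α → ℝ, ∫ a, g a ∂ν = ∫ a, g a * f a ∂μ := by
  have hint : Integrable f μ := .of_integral_ne_zero hpos.ne'
  let ν := μ.withDensity fun a => ENNReal.ofReal (f a)
  have hfinite : IsFiniteMeasure ν := isFiniteMeasure_withDensity_ofReal hint.2
  have hintegral (g : α → ℝ) : ∫ a, g a ∂ν = ∫ a, g a * f a ∂μ := by
    rw [integral_withDensity_eq_integral_toReal_smul₀ hint.aemeasurable.ennreal_ofReal (by simp)]
    refine integral_congr_ae ?_
    filter_upwards [hf] with a ha
    rw [ENNReal.toReal_ofReal ha, smul_eq_mul, mul_comm]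
  have hmass : ν.real univ = ∫ a, f a ∂μ := by simpa using hintegral 1
  refine ⟨ν, hfinite, ⟨fun hν => hpos.ne ?_⟩, hmass, hintegral⟩
  simp [← hmass, hν]

theorem mul_exp_neg_sq_div_le_sqrt {t : ℝ} (ht : 0 < t) (s : ℝ) :
    s * exp (-s ^ 2 / (4 * t)) ≤ √t := by
  have hamgm : s ≤ √t * (s ^ 2 / (4 * t) + 1) := by
    have hsq : √t * (s ^ 2 / (4 * t) + 1) - s = (s - 2 * √t) ^ 2 / (4 * √t) := by
      field_simp
      linear_combination s ^ 2 * sq_sqrt ht.le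
    have : 0 ≤ (s - 2 * √t) ^ 2 / (4 * √t) := by positivity
    linarith
  rw [neg_div, exp_neg, ← div_eq_mul_inv, div_le_iff₀ (exp_pos _)]
  exact hamgm.trans (by gcongr; exact add_one_le_exp _)

theorem le_mul_log_div_of_le_log_div {s c a b m v : ℝ} (hs : 0 ≤ s) (hc : 1 ≤ c) (hb : 0 < b)
    (hba : b ≤ a) (h : s ≤ log (m / (a * v))) : s ≤ c * log (m / (b * v)) := by
  have hlog : log (m / (a * v)) ≤ log (m / (b * v)) := by
    rw [mul_comm a, mul_comm b, ← div_div, ← div_div]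
    rcases eq_or_ne (m / v) 0 with hmv | hmv
    · simp [hmv]
    · rw [log_div hmv (hb.trans_le hba).ne', log_div hmv hb.ne']
      gcongr
  have hle := h.trans hlog
  exact hle.trans (le_mul_of_one_le_left (hs.trans hle) hc)

end Preliminaries

section GaussTransform

variable {E : Type*} [NormedAddCommGroup E]

theorem exp_neg_mul_exp_norm_sub_sq (t : ℝ) (x z : E) :
    exp (-‖x - z‖ ^ 2 / (4 * t)) * exp (‖z - x‖ ^ 2 / (4 * t)) = 1 := by
  rw [norm_sub_rev z x, neg_div, ← exp_add, neg_add_cancel, exp_zero]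

theorem hasGradientAt_exp_neg_norm_sub_sq [InnerProductSpace ℝ E] [CompleteSpace E]
    (t : ℝ) (x z : E) :
    HasGradientAt (fun x => exp (-‖x - z‖ ^ 2 / (4 * t)))
      ((exp (-‖x - z‖ ^ 2 / (4 * t)) / (2 * t)) • (z - x)) x := by
  have hderiv := (((hasFDerivAt_id x).sub_const z).norm_sq.neg.mul_const (4 * t)⁻¹).exp
  rw [hasGradientAt_iff_hasFDerivAt]
  simp only [div_eq_mul_inv]
  refine hderiv.congr_fderiv ?_
  ext v
  simp only [id_eq, Pi.neg_apply, mul_inv_rev, neg_mul, map_sub, ContinuousLinearMap.comp_id,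
    smul_neg, neg_apply, smul_apply, sub_apply, coe_innerSL_apply, nsmul_eq_mul, Nat.cast_ofNat,
    smul_eq_mul, map_smul, InnerProductSpace.toDual_apply_apply]
  ring

variable [MeasurableSpace E]

/-- The Gaussian integral `∫ exp (-‖x - z‖² / (4t)) dμ(z)`, i.e. the heat flow at time `t` started
from `μ`. The factor `(4πt)^(-n/2)` is left out so that the space may be infinite-dimensional. -/
noncomputable def gaussTransform (μ : Measure E) (t : ℝ) (x : E) : ℝ :=
  ∫ z, exp (-‖x - z‖ ^ 2 / (4 * t)) ∂μ

/-- The probability measure proportional to `exp (-‖x - z‖² / (4t)) dμ(z)`: the law of the starting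
point of a heat flow started from `μ`, conditioned on being at `x` at time `t`. -/
noncomputable def gaussTilt (μ : Measure E) (t : ℝ) (x : E) : Measure E :=
  μ.tilted fun z => -‖x - z‖ ^ 2 / (4 * t)

theorem integral_exp_norm_sub_sq_gaussTilt (μ : Measure E) (t : ℝ) (x : E) :
    ∫ z, exp (‖z - x‖ ^ 2 / (4 * t)) ∂gaussTilt μ t x = μ.real univ / gaussTransform μ t x := by
  simp only [gaussTilt, gaussTransform, integral_exp_tilted, Pi.add_apply, exp_add,
    exp_neg_mul_exp_norm_sub_sq, integral_const, smul_eq_mul, mul_one]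

variable [OpensMeasurableSpace E] [SecondCountableTopology E] {μ : Measure E} [IsFiniteMeasure μ]
  {t : ℝ}

theorem integrable_exp_neg_norm_sub_sq (ht : 0 ≤ t) (x : E) :
    Integrable (fun z => exp (-‖x - z‖ ^ 2 / (4 * t))) μ := by
  refine .of_bound (by fun_prop) 1 (.of_forall fun z => ?_)
  rw [norm_of_nonneg (exp_nonneg _), exp_le_one_iff, neg_div]
  exact neg_nonpos.2 (by positivity)

theorem gaussTransform_pos [NeZero μ] (ht : 0 ≤ t) (x : E) : 0 < gaussTransform μ t x :=
  integral_exp_pos (integrable_exp_neg_norm_sub_sq ht x)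

theorem isProbabilityMeasure_gaussTilt [NeZero μ] (ht : 0 ≤ t) (x : E) :
    IsProbabilityMeasure (gaussTilt μ t x) :=
  isProbabilityMeasure_tilted (integrable_exp_neg_norm_sub_sq ht x)

theorem integrable_exp_norm_sub_sq_gaussTilt (ht : 0 ≤ t) (x : E) :
    Integrable (fun z => exp (‖z - x‖ ^ 2 / (4 * t))) (gaussTilt μ t x) := by
  rw [gaussTilt, integrable_tilted_iff (integrable_exp_neg_norm_sub_sq ht x)]
  simp only [smul_eq_mul, exp_neg_mul_exp_norm_sub_sq, integrable_const]

theorem integrable_sub_gaussTilt [NormedSpace ℝ E] (ht : 0 < t) (x : E) :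
    Integrable (fun z => z - x) (gaussTilt μ t x) := by
  rw [gaussTilt, integrable_tilted_iff (integrable_exp_neg_norm_sub_sq ht.le x)]
  refine .of_bound (by fun_prop) √t (.of_forall fun z => ?_)
  rw [norm_smul, norm_of_nonneg (exp_nonneg _), mul_comm, norm_sub_rev x]
  exact mul_exp_neg_sq_div_le_sqrt ht ‖z - x‖

variable [InnerProductSpace ℝ E] [CompleteSpace E]

theorem hasGradientAt_gaussTransform (ht : 0 < t) (x : E) :
    HasGradientAt (gaussTransform μ t)
      (∫ z, (exp (-‖x - z‖ ^ 2 / (4 * t)) / (2 * t)) • (z - x) ∂μ) x := by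
  refine hasGradientAt_integral_of_dominated_of_gradient_le
    (F' := fun x z => (exp (-‖x - z‖ ^ 2 / (4 * t)) / (2 * t)) • (z - x))
    (bound := fun _ => √t / (2 * t)) Filter.univ_mem (.of_forall fun x => by fun_prop)
    (integrable_exp_neg_norm_sub_sq ht.le x) (by fun_prop) (.of_forall fun z x _ => ?_)
    (integrable_const _) (.of_forall fun z x _ => hasGradientAt_exp_neg_norm_sub_sq t x z)
  rw [norm_smul, norm_of_nonneg (by positivity), div_mul_eq_mul_div, mul_comm, norm_sub_rev x]
  gcongr
  exact mul_exp_neg_sq_div_le_sqrt ht ‖z - x‖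

theorem gradient_gaussTransform [NeZero μ] (ht : 0 < t) (x : E) :
    gradient (gaussTransform μ t) x =
      (gaussTransform μ t x / (2 * t)) • ∫ z, (z - x) ∂gaussTilt μ t x := by
  have hpos := gaussTransform_pos (μ := μ) ht.le x
  rw [(hasGradientAt_gaussTransform ht x).gradient, gaussTilt, integral_tilted, ← integral_smul]
  congr 1 with z
  rw [smul_smul, ← gaussTransform]
  congr 1
  field_simp

theorem mul_norm_gradient_gaussTransform_sq_div_sq_le_log [NeZero μ] (ht : 0 < t) (x : E) :
    t * ‖gradient (gaussTransform μ t) x‖ ^ 2 / gaussTransform μ t x ^ 2 ≤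
      log (μ.real univ / gaussTransform μ t x) := by
  have hpos := gaussTransform_pos (μ := μ) ht.le x
  have := isProbabilityMeasure_gaussTilt (μ := μ) ht.le x
  have hjensen := exp_norm_integral_sq_div_le_integral (by positivity)
    (integrable_sub_gaussTilt (μ := μ) ht x) (integrable_exp_norm_sub_sq_gaussTilt ht.le x)
  rw [integral_exp_norm_sub_sq_gaussTilt] at hjensen
  calc t * ‖gradient (gaussTransform μ t) x‖ ^ 2 / gaussTransform μ t x ^ 2
      = ‖∫ z, (z - x) ∂gaussTilt μ t x‖ ^ 2 / (4 * t) := by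
        rw [gradient_gaussTransform ht, norm_smul, norm_of_nonneg (by positivity)]
        field_simp
        ring
    _ ≤ log (μ.real univ / gaussTransform μ t x) :=
        (le_log_iff_exp_le ((exp_pos _).trans_le hjensen)).2 hjensen

end GaussTransform

theorem integral_heatK_s3 (n : ℕ) (μ : Measure (EuclideanSpace ℝ (Fin n))) {t : ℝ} (ht : 0 ≤ t)
    (y : EuclideanSpace ℝ (Fin n)) :
    ∫ z, heatK n y z t ∂μ =
      gaussTransform (((4 * π * t) ^ (-(n : ℝ) / 2)).toNNReal • μ) t y := by
  rw [gaussTransform, integral_smul_nnreal_measure, NNReal.smul_def,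
    coe_toNNReal _ (by positivity), smul_eq_mul, ← integral_const_mul]
  rfl

theorem stmt3_general (n : ℕ) (μ : Measure (EuclideanSpace ℝ (Fin n))) [IsFiniteMeasure μ]
    [NeZero μ] (u : EuclideanSpace ℝ (Fin n) → ℝ → ℝ)
    (hu : ∀ y t, u y t = ∫ z, heatK n y z t ∂μ) (m : ℝ) (hm : m = μ.real univ)
    (y : EuclideanSpace ℝ (Fin n)) {t : ℝ} (ht : 0 < t) :
    t * ‖gradient (fun z => u z t) y‖ ^ 2 / (u y t) ^ 2
      ≤ log (m / ((4 * π * t) ^ ((n : ℝ) / 2) * u y t)) := by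
  set c := (4 * π * t) ^ (-(n : ℝ) / 2) with hc
  have hcpos : 0 < c := by positivity
  have hne : NeZero (c.toNNReal • μ) := ⟨by simp [NeZero.ne μ, hcpos]⟩
  have hut (x) : u x t = gaussTransform (c.toNNReal • μ) t x :=
    (hu x t).trans (integral_heatK_s3 n μ ht.le x)
  have hmass : (c.toNNReal • μ).real univ = m / (4 * π * t) ^ ((n : ℝ) / 2) := by
    rw [measureReal_nnreal_smul_apply, coe_toNNReal _ hcpos.le, hm, hc, neg_div,
      rpow_neg (by positivity), inv_mul_eq_div]
  simp only [hut, ← div_div, ← hmass]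
  exact mul_norm_gradient_gaussTransform_sq_div_sq_le_log ht y

/-- Flat-space case of Lemma 2(ii) of the paper: for the positive solution `u`
of the heat equation with initial data `u₀` and `m = ∫ u₀`, one has
`t ‖∇u‖²/u² ≤ (2+t) log( m / ((2πt)^{n/2} u) )` for `0 < t ≤ 1`. -/
theorem stmt3 (n : ℕ) (hn : 1 ≤ n)
    (u₀ : EuclideanSpace ℝ (Fin n) → ℝ) (hc : Continuous u₀)
    (hsupp : HasCompactSupport u₀) (hnn : ∀ z, 0 ≤ u₀ z) (hne : ∃ z, u₀ z ≠ 0)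
    (u : EuclideanSpace ℝ (Fin n) → ℝ → ℝ)
    (hu : ∀ y t, u y t = ∫ z, heatK n y z t * u₀ z)
    (m : ℝ) (hm : m = ∫ z, u₀ z) :
    ∀ (y : EuclideanSpace ℝ (Fin n)), ∀ t ∈ Set.Ioc (0 : ℝ) 1,
      t * ‖gradient (fun z => u z t) y‖ ^ 2 / (u y t) ^ 2
        ≤ (2 + t) * Real.log (m / ((2 * π * t) ^ ((n : ℝ) / 2) * u y t)) := by
  intro y t ⟨ht, _⟩
  have hpos : 0 < ∫ z, u₀ z :=
    hne.elim fun _ => hc.integral_pos_of_hasCompactSupport_nonneg_nonzero hsupp hnn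
  obtain ⟨μ, _, _, hmass, hμ⟩ := exists_measure_integral_eq_integral_mul (.of_forall hnn) hpos
  exact le_mul_log_div_of_le_log_div (by positivity) (by linarith) (by positivity)
    (by gcongr; norm_num) (stmt3_general n μ u (fun y t => (hu y t).trans (hμ _).symm) m
      (hm.trans hmass.symm) y ht)
end

section
/- Let u be a smooth positive solution of the heat equation ∂u/∂t = Δu on U × (a,b), where U ⊆ ℝⁿ is open. Then on U × (a,b) one has the identity (∂/∂t - Δ)( ‖∇u‖²/u ) = -(2/u) ‖ ∇²u - (∇u ⊗ ∇u)/u ‖²_F, where ‖·‖_F denotes the Frobenius norm of an n×n matrix; in particular (∂/∂t - Δ)( ‖∇u‖²/u ) ≤ 0. -/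
open Real MeasureTheory Filter Set

/-- `i`-th partial derivative of `f : ℝⁿ → ℝ`. -/
noncomputable def pdv {n : ℕ} (i : Fin n) (f : EuclideanSpace ℝ (Fin n) → ℝ)
    (y : EuclideanSpace ℝ (Fin n)) : ℝ :=
  fderiv ℝ f y (EuclideanSpace.single i 1)

/-- `(i,j)` entry of the Hessian of `f : ℝⁿ → ℝ`. -/
noncomputable def hess {n : ℕ} (i j : Fin n) (f : EuclideanSpace ℝ (Fin n) → ℝ)
    (y : EuclideanSpace ℝ (Fin n)) : ℝ :=
  pdv i (pdv j f) y

/-- Euclidean Laplacian (trace of the Hessian) of `f : ℝⁿ → ℝ`. -/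
noncomputable def lap {n : ℕ} (f : EuclideanSpace ℝ (Fin n) → ℝ)
    (y : EuclideanSpace ℝ (Fin n)) : ℝ :=
  ∑ i, hess i i f y

/-!
Write `L` for the heat operator, so `L u = 0`. Since `L` has constant coefficients it commutes with
`∂ᵢ`, and it satisfies `L (f g) = f L g + g L f - 2 ⟨∇f, ∇g⟩`. Applied to `‖∇u‖² = ∑ᵢ (∂ᵢu)²` this
gives `L ‖∇u‖² = -2 ‖∇²u‖²`, and applied to `‖∇u‖² = w u` with `w = ‖∇u‖² / u` it gives
`L ‖∇u‖² = u L w - 2 ⟨∇w, ∇u⟩`. Here `u ⟨∇w, ∇u⟩ = 2 ∇²u(∇u, ∇u) - w ‖∇u‖²`, so comparing the two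
expressions for `L ‖∇u‖²` completes a square.
-/

open scoped Topology

section DirDeriv

variable {V : Type*} [NormedAddCommGroup V] [NormedSpace ℝ V] {f g : V → ℝ} {p : V}

/-- The directional derivative of `f` along `v`, as a function of the base point so that it can be
iterated. It is `fderiv` applied to `v`, hence `0` where `f` is not differentiable. -/
noncomputable def dirDeriv (v : V) (f : V → ℝ) (p : V) : ℝ :=
  fderiv ℝ f p v

theorem dirDeriv_congr (h : f =ᶠ[𝓝 p] g) (v : V) : dirDeriv v f =ᶠ[𝓝 p] dirDeriv v g :=
  h.fderiv.fun_comp (· v)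

theorem contDiffAt_dirDeriv {m n : WithTop ℕ∞} (hf : ContDiffAt ℝ n f p) (hmn : m + 1 ≤ n)
    (v : V) : ContDiffAt ℝ m (dirDeriv v f) p :=
  (hf.fderiv_right hmn).clm_apply contDiffAt_const

theorem dirDeriv_add (hf : DifferentiableAt ℝ f p) (hg : DifferentiableAt ℝ g p) (v : V) :
    dirDeriv v (f + g) p = dirDeriv v f p + dirDeriv v g p := by
  simp only [dirDeriv, fderiv_add hf hg, add_apply]

theorem dirDeriv_sub (hf : DifferentiableAt ℝ f p) (hg : DifferentiableAt ℝ g p) (v : V) :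
    dirDeriv v (f - g) p = dirDeriv v f p - dirDeriv v g p := by
  simp only [dirDeriv, fderiv_sub hf hg, sub_apply]

theorem dirDeriv_mul (hf : DifferentiableAt ℝ f p) (hg : DifferentiableAt ℝ g p) (v : V) :
    dirDeriv v (f * g) p = dirDeriv v f p * g p + f p * dirDeriv v g p := by
  simp only [dirDeriv, fderiv_mul hf hg, add_apply,
    smul_apply, smul_eq_mul]
  ring

theorem dirDeriv_sum {ι : Type*} {s : Finset ι} {f : ι → V → ℝ}
    (hf : ∀ i ∈ s, DifferentiableAt ℝ (f i) p) (v : V) :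
    dirDeriv v (∑ i ∈ s, f i) p = ∑ i ∈ s, dirDeriv v (f i) p := by
  simp only [dirDeriv, fderiv_sum hf, sum_apply]

theorem dirDeriv_comm (hf : ContDiffAt ℝ 2 f p) (v w : V) :
    dirDeriv v (dirDeriv w f) p = dirDeriv w (dirDeriv v f) p := by
  have hdiff : DifferentiableAt ℝ (fderiv ℝ f) p :=
    (hf.fderiv_right (m := 1) (by norm_num)).differentiableAt (by simp)
  have hsecond (a b : V) : dirDeriv a (dirDeriv b f) p = fderiv ℝ (fderiv ℝ f) p a b := by
    change fderiv ℝ (fun q => fderiv ℝ f q b) p a = _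
    simp [fderiv_clm_apply hdiff (differentiableAt_const b)]
  rw [hsecond, hsecond]
  exact hf.isSymmSndFDerivAt (by simp) v w

theorem dirDeriv_dirDeriv_mul (hf : ContDiffAt ℝ 2 f p) (hg : ContDiffAt ℝ 2 g p) (v : V) :
    dirDeriv v (dirDeriv v (f * g)) p = dirDeriv v (dirDeriv v f) p * g p
      + 2 * (dirDeriv v f p * dirDeriv v g p) + f p * dirDeriv v (dirDeriv v g) p := by
  have hleibniz : dirDeriv v (f * g) =ᶠ[𝓝 p] dirDeriv v f * g + f * dirDeriv v g := by
    filter_upwards [hf.eventually (by simp), hg.eventually (by simp)] with q hfq hgq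
    exact dirDeriv_mul (hfq.differentiableAt (by simp)) (hgq.differentiableAt (by simp)) v
  have hf₀ : DifferentiableAt ℝ f p := hf.differentiableAt (by simp)
  have hg₀ : DifferentiableAt ℝ g p := hg.differentiableAt (by simp)
  have hf₁ : DifferentiableAt ℝ (dirDeriv v f) p :=
    (contDiffAt_dirDeriv (m := 1) hf (by norm_num) v).differentiableAt (by simp)
  have hg₁ : DifferentiableAt ℝ (dirDeriv v g) p :=
    (contDiffAt_dirDeriv (m := 1) hg (by norm_num) v).differentiableAt (by simp)
  rw [(dirDeriv_congr hleibniz v).eq_of_nhds, dirDeriv_add (hf₁.mul hg₀) (hf₀.mul hg₁),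
    dirDeriv_mul hf₁ hg₀, dirDeriv_mul hf₀ hg₁]
  ring

theorem dirDeriv_dirDeriv_sum {ι : Type*} {s : Finset ι} {f : ι → V → ℝ}
    (hf : ∀ i ∈ s, ContDiffAt ℝ 2 (f i) p) (v : V) :
    dirDeriv v (dirDeriv v (∑ i ∈ s, f i)) p = ∑ i ∈ s, dirDeriv v (dirDeriv v (f i)) p := by
  have hsum : dirDeriv v (∑ i ∈ s, f i) =ᶠ[𝓝 p] ∑ i ∈ s, dirDeriv v (f i) := by
    have hnear : ∀ᶠ q in 𝓝 p, ∀ i ∈ s, ContDiffAt ℝ 2 (f i) q :=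
      (Finset.eventually_all s).2 fun i hi => (hf i hi).eventually (by simp)
    filter_upwards [hnear] with q hq
    rw [Finset.sum_apply, dirDeriv_sum fun i hi => (hq i hi).differentiableAt (by simp)]
  rw [(dirDeriv_congr hsum v).eq_of_nhds, dirDeriv_sum fun i hi =>
    (contDiffAt_dirDeriv (m := 1) (hf i hi) (by norm_num) v).differentiableAt (by simp)]

end DirDeriv

section HeatOp

variable {V : Type*} [NormedAddCommGroup V] [NormedSpace ℝ V] {ι : Type*} [Fintype ι]
  {τ : V} {e : ι → V} {f g : V → ℝ} {p : V}

/-- The heat operator `∂_τ - ∑ᵢ ∂_{eᵢ}²` of a time direction `τ` and space directions `e`. Keeping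
time and space in one space `V` makes mixed derivatives ordinary second derivatives on `V`. -/
noncomputable def heatOp (τ : V) (e : ι → V) (f : V → ℝ) (p : V) : ℝ :=
  dirDeriv τ f p - ∑ i, dirDeriv (e i) (dirDeriv (e i) f) p

/-- The Fisher information density `‖∇f‖² / f`, where the gradient is taken along the directions
`e`. -/
noncomputable def fisherDensity (e : ι → V) (f : V → ℝ) (p : V) : ℝ :=
  (∑ i, dirDeriv (e i) f p ^ 2) / f p

theorem heatOp_congr (h : f =ᶠ[𝓝 p] g) : heatOp τ e f p = heatOp τ e g p := by
  simp only [heatOp, (dirDeriv_congr h τ).eq_of_nhds,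
    fun i => (dirDeriv_congr (dirDeriv_congr h (e i)) (e i)).eq_of_nhds]

theorem heatOp_mul (hf : ContDiffAt ℝ 2 f p) (hg : ContDiffAt ℝ 2 g p) :
    heatOp τ e (f * g) p = heatOp τ e f p * g p + f p * heatOp τ e g p
      - 2 * ∑ i, dirDeriv (e i) f p * dirDeriv (e i) g p := by
  simp only [heatOp, dirDeriv_dirDeriv_mul hf hg, Finset.sum_add_distrib, ← Finset.sum_mul,
    ← Finset.mul_sum,
    dirDeriv_mul (hf.differentiableAt (by simp)) (hg.differentiableAt (by simp))]
  ring

theorem heatOp_sum {κ : Type*} {s : Finset κ} {f : κ → V → ℝ}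
    (hf : ∀ k ∈ s, ContDiffAt ℝ 2 (f k) p) :
    heatOp τ e (∑ k ∈ s, f k) p = ∑ k ∈ s, heatOp τ e (f k) p := by
  simp only [heatOp, dirDeriv_dirDeriv_sum hf, Finset.sum_sub_distrib,
    dirDeriv_sum fun k hk => (hf k hk).differentiableAt (by simp)]
  rw [Finset.sum_comm]

theorem heatOp_dirDeriv (hf : ContDiffAt ℝ 3 f p) (v : V) :
    heatOp τ e (dirDeriv v f) p = dirDeriv v (heatOp τ e f) p := by
  have hf₁ (w : V) : ContDiffAt ℝ 2 (dirDeriv w f) p := contDiffAt_dirDeriv hf (by norm_num) w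
  have hf₂ (w : V) : DifferentiableAt ℝ (dirDeriv w (dirDeriv w f)) p :=
    (contDiffAt_dirDeriv (m := 1) (hf₁ w) (by norm_num) w).differentiableAt (by simp)
  have hcomm (w : V) : dirDeriv w (dirDeriv v f) =ᶠ[𝓝 p] dirDeriv v (dirDeriv w f) := by
    filter_upwards [hf.eventually (by simp)] with q hq
    exact dirDeriv_comm (hq.of_le (by norm_num)) w v
  have hheatOp : heatOp τ e f = dirDeriv τ f - ∑ i, dirDeriv (e i) (dirDeriv (e i) f) := by
    ext q
    simp only [heatOp, Pi.sub_apply, Finset.sum_apply]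
  rw [hheatOp, dirDeriv_sub ((hf₁ τ).differentiableAt (by simp)) (.sum fun i _ => hf₂ (e i)),
    dirDeriv_sum fun i _ => hf₂ (e i)]
  simp only [heatOp, (hcomm τ).eq_of_nhds, (dirDeriv_congr (hcomm _) _).eq_of_nhds,
    dirDeriv_comm (hf₁ _) v]

theorem contDiffAt_fisherDensity {m n : WithTop ℕ∞} (hf : ContDiffAt ℝ n f p) (hmn : m + 1 ≤ n)
    (hp : f p ≠ 0) : ContDiffAt ℝ m (fisherDensity e f) p :=
  (ContDiffAt.sum fun i _ => (contDiffAt_dirDeriv hf hmn (e i)).pow 2).div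
    (hf.of_le (le_self_add.trans hmn)) hp

theorem fisherDensity_mul_self (hp : f p ≠ 0) :
    (fisherDensity e f * f) p = ∑ i, dirDeriv (e i) f p ^ 2 :=
  div_mul_cancel₀ _ hp

theorem fisherDensity_mul_self_eventuallyEq (hf : ContinuousAt f p) (hp : f p ≠ 0) :
    fisherDensity e f * f =ᶠ[𝓝 p] ∑ i, dirDeriv (e i) f * dirDeriv (e i) f := by
  filter_upwards [hf.eventually_ne hp] with q hq
  simp only [fisherDensity_mul_self hq, Finset.sum_apply, Pi.mul_apply, sq]

theorem heatOp_fisherDensity_mul_self (hf : ContDiffAt ℝ 3 f p) (hp : f p ≠ 0)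
    (hheat : heatOp τ e f =ᶠ[𝓝 p] 0) :
    heatOp τ e (fisherDensity e f * f) p
      = -2 * ∑ i, ∑ j, dirDeriv (e i) (dirDeriv (e j) f) p ^ 2 := by
  have hf₁ (i : ι) : ContDiffAt ℝ 2 (dirDeriv (e i) f) p :=
    contDiffAt_dirDeriv hf (by norm_num) (e i)
  have hsq (i : ι) : ContDiffAt ℝ 2 (dirDeriv (e i) f * dirDeriv (e i) f) p :=
    (hf₁ i).mul (hf₁ i)
  have hheat₁ (i : ι) : heatOp τ e (dirDeriv (e i) f) p = 0 := by
    rw [heatOp_dirDeriv hf, (dirDeriv_congr hheat (e i)).eq_of_nhds]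
    simp [dirDeriv]
  rw [heatOp_congr (fisherDensity_mul_self_eventuallyEq hf.continuousAt hp),
    heatOp_sum fun i _ => hsq i, Finset.sum_comm, Finset.mul_sum]
  refine Finset.sum_congr rfl fun i _ => ?_
  rw [heatOp_mul (hf₁ i) (hf₁ i), hheat₁]
  simp only [sq]
  ring

theorem dirDeriv_fisherDensity_mul_self (hf : ContDiffAt ℝ 2 f p) (hp : f p ≠ 0) (v : V) :
    dirDeriv v (fisherDensity e f) p * f p
      = 2 * ∑ i, dirDeriv (e i) f p * dirDeriv v (dirDeriv (e i) f) p
        - fisherDensity e f p * dirDeriv v f p := by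
  have hf₀ : DifferentiableAt ℝ f p := hf.differentiableAt (by simp)
  have hf₁ (i : ι) : DifferentiableAt ℝ (dirDeriv (e i) f) p :=
    (contDiffAt_dirDeriv (m := 1) hf (by norm_num) (e i)).differentiableAt (by simp)
  have hw : DifferentiableAt ℝ (fisherDensity e f) p :=
    (contDiffAt_fisherDensity (m := 1) hf (by norm_num) hp).differentiableAt (by simp)
  have hderiv :=
    (dirDeriv_congr (fisherDensity_mul_self_eventuallyEq (e := e) hf₀.continuousAt hp) v).eq_of_nhds
  rw [dirDeriv_mul hw hf₀, dirDeriv_sum fun i _ => (hf₁ i).mul (hf₁ i)] at hderiv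
  rw [eq_sub_of_add_eq hderiv, Finset.mul_sum]
  congr 1
  refine Finset.sum_congr rfl fun i _ => ?_
  rw [dirDeriv_mul (hf₁ i) (hf₁ i)]
  ring

theorem sum_dirDeriv_fisherDensity_mul_self (hf : ContDiffAt ℝ 2 f p) (hp : f p ≠ 0) :
    (∑ i, dirDeriv (e i) (fisherDensity e f) p * dirDeriv (e i) f p) * f p
      = 2 * ∑ i, ∑ j, dirDeriv (e i) f p * dirDeriv (e j) f p
            * dirDeriv (e i) (dirDeriv (e j) f) p
        - fisherDensity e f p * ∑ i, dirDeriv (e i) f p ^ 2 := by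
  rw [Finset.sum_mul, Finset.mul_sum, Finset.mul_sum, ← Finset.sum_sub_distrib]
  refine Finset.sum_congr rfl fun i _ => ?_
  rw [mul_right_comm, dirDeriv_fisherDensity_mul_self hf hp]
  simp only [mul_assoc, ← Finset.mul_sum]
  ring

theorem sum_sum_sub_mul_div_sq (H : ι → ι → ℝ) (P : ι → ℝ) (c : ℝ) :
    ∑ i, ∑ j, (H i j - P i * P j / c) ^ 2
      = ∑ i, ∑ j, H i j ^ 2 - 2 / c * ∑ i, ∑ j, P i * P j * H i j + (∑ i, P i ^ 2) ^ 2 / c ^ 2 := by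
  rw [sq (∑ i, P i ^ 2), Finset.sum_mul_sum]
  simp only [Finset.sum_div, Finset.mul_sum, ← Finset.sum_add_distrib, ← Finset.sum_sub_distrib]
  exact Finset.sum_congr rfl fun i _ => Finset.sum_congr rfl fun j _ => by ring

theorem heatOp_fisherDensity (hf : ContDiffAt ℝ 3 f p) (hp : f p ≠ 0)
    (hheat : heatOp τ e f =ᶠ[𝓝 p] 0) :
    heatOp τ e (fisherDensity e f) p = -(2 / f p) * ∑ i, ∑ j,
      (dirDeriv (e i) (dirDeriv (e j) f) p
        - dirDeriv (e i) f p * dirDeriv (e j) f p / f p) ^ 2 := by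
  have hf₂ : ContDiffAt ℝ 2 f p := hf.of_le (by norm_num)
  have hbochner := heatOp_fisherDensity_mul_self hf hp hheat
  rw [heatOp_mul (contDiffAt_fisherDensity hf (by norm_num) hp) hf₂, hheat.eq_of_nhds,
    Pi.zero_apply, mul_zero, add_zero] at hbochner
  have hcross := sum_dirDeriv_fisherDensity_mul_self (e := e) hf₂ hp
  rw [show fisherDensity e f p = (∑ i, dirDeriv (e i) f p ^ 2) / f p from rfl] at hcross
  rw [sum_sum_sub_mul_div_sq, eq_div_of_mul_eq hp (eq_add_of_sub_eq hbochner),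
    eq_div_of_mul_eq hp hcross]
  field_simp
  ring

end HeatOp

section Slice

theorem dirDeriv_slice {E F : Type*} [NormedAddCommGroup E] [NormedSpace ℝ E]
    [NormedAddCommGroup F] [NormedSpace ℝ F] {f : E × F → ℝ} {y : E} {t : F}
    (hf : DifferentiableAt ℝ f (y, t)) (v : E) :
    dirDeriv v (fun z => f (z, t)) y = dirDeriv (v, 0) f (y, t) := by
  have hslice : HasFDerivAt (fun z => f (z, t)) _ y :=
    hf.hasFDerivAt.comp (f := fun z => (z, t)) y (hasFDerivAt_prodMk_left y t)
  exact congrArg (· v) hslice.fderiv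

theorem deriv_slice {E : Type*} [NormedAddCommGroup E] [NormedSpace ℝ E] {f : E × ℝ → ℝ} {y : E}
    {t : ℝ} (hf : DifferentiableAt ℝ f (y, t)) :
    deriv (fun s => f (y, s)) t = dirDeriv (0, 1) f (y, t) :=
  (hf.hasFDerivAt.comp_hasDerivAt t ((hasDerivAt_const t y).prodMk (hasDerivAt_id t))).deriv

variable {n : ℕ} {f : EuclideanSpace ℝ (Fin n) × ℝ → ℝ} {y : EuclideanSpace ℝ (Fin n)} {t : ℝ}

/-- The `i`-th coordinate direction of `ℝⁿ` as a direction in space-time `ℝⁿ × ℝ`. -/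
noncomputable def spaceDir (i : Fin n) : EuclideanSpace ℝ (Fin n) × ℝ :=
  (EuclideanSpace.single i 1, 0)

theorem pdv_slice (hf : DifferentiableAt ℝ f (y, t)) (i : Fin n) :
    pdv i (fun z => f (z, t)) y = dirDeriv (spaceDir i) f (y, t) :=
  dirDeriv_slice hf _

theorem hess_slice (hf : ContDiffAt ℝ 2 f (y, t)) (i j : Fin n) :
    hess i j (fun z => f (z, t)) y = dirDeriv (spaceDir i) (dirDeriv (spaceDir j) f) (y, t) := by
  have hpdv : pdv j (fun z => f (z, t)) =ᶠ[𝓝 y] fun z => dirDeriv (spaceDir j) f (z, t) := by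
    filter_upwards [(Continuous.prodMk_left t).continuousAt.eventually (hf.eventually (by simp))]
      with z hz
    exact pdv_slice (hz.differentiableAt (by simp)) j
  have hdiff : DifferentiableAt ℝ (dirDeriv (spaceDir j) f) (y, t) :=
    (contDiffAt_dirDeriv (m := 1) hf (by norm_num) _).differentiableAt (by simp)
  exact (dirDeriv_congr hpdv _).eq_of_nhds.trans (pdv_slice hdiff i)

theorem deriv_sub_lap_slice (hf : ContDiffAt ℝ 2 f (y, t)) :
    deriv (fun s => f (y, s)) t - lap (fun z => f (z, t)) y = heatOp (0, 1) spaceDir f (y, t) := by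
  simp only [lap, heatOp, deriv_slice (hf.differentiableAt (by simp)), hess_slice hf]

theorem norm_gradient_sq_eq_sum_pdv_sq (f : EuclideanSpace ℝ (Fin n) → ℝ)
    (y : EuclideanSpace ℝ (Fin n)) :
    ‖gradient f y‖ ^ 2 = ∑ i, pdv i f y ^ 2 := by
  have hcoord (i : Fin n) : gradient f y i = pdv i f y := by
    rw [pdv, ← InnerProductSpace.toDual_symm_apply, EuclideanSpace.inner_single_right]
    simp [gradient]
  simp only [EuclideanSpace.norm_sq_eq, hcoord, Real.norm_eq_abs, sq_abs]

theorem norm_gradient_sq_div_slice (hf : DifferentiableAt ℝ f (y, t)) :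
    ‖gradient (fun z => f (z, t)) y‖ ^ 2 / f (y, t) = fisherDensity spaceDir f (y, t) := by
  simp only [norm_gradient_sq_eq_sum_pdv_sq, fisherDensity, pdv_slice hf]

end Slice

theorem stmt4_general {n : ℕ} {u : EuclideanSpace ℝ (Fin n) → ℝ → ℝ}
    {y : EuclideanSpace ℝ (Fin n)} {t : ℝ}
    (hu : ContDiffAt ℝ 3 (fun p : EuclideanSpace ℝ (Fin n) × ℝ => u p.1 p.2) (y, t))
    (hpos : 0 < u y t)
    (hheat : ∀ᶠ p : EuclideanSpace ℝ (Fin n) × ℝ in 𝓝 (y, t),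
      deriv (fun s => u p.1 s) p.2 = lap (fun z => u z p.2) p.1) :
    (deriv (fun s => ‖gradient (fun z => u z s) y‖ ^ 2 / u y s) t
        - lap (fun z => ‖gradient (fun z' => u z' t) z‖ ^ 2 / u z t) y
      = -(2 / u y t) * ∑ i, ∑ j,
          (hess i j (fun z => u z t) y
            - pdv i (fun z => u z t) y * pdv j (fun z => u z t) y / u y t) ^ 2)
    ∧ deriv (fun s => ‖gradient (fun z => u z s) y‖ ^ 2 / u y s) t
        - lap (fun z => ‖gradient (fun z' => u z' t) z‖ ^ 2 / u z t) y ≤ 0 := by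
  set f : EuclideanSpace ℝ (Fin n) × ℝ → ℝ := fun p => u p.1 p.2
  set w : EuclideanSpace ℝ (Fin n) × ℝ → ℝ :=
    fun p => ‖gradient (fun z => u z p.2) p.1‖ ^ 2 / u p.1 p.2
  have hw : w =ᶠ[𝓝 (y, t)] fisherDensity spaceDir f := by
    filter_upwards [hu.eventually (by simp)] with p hp
    exact norm_gradient_sq_div_slice (f := f) (hp.differentiableAt (by simp))
  have hw₂ : ContDiffAt ℝ 2 w (y, t) :=
    (contDiffAt_fisherDensity hu (by norm_num) hpos.ne').congr_of_eventuallyEq hw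
  have hheatOp : heatOp (0, 1) spaceDir f =ᶠ[𝓝 (y, t)] 0 := by
    filter_upwards [hu.eventually (by simp), hheat] with p hp hp_heat
    rw [← deriv_sub_lap_slice (f := f) (hp.of_le (by norm_num))]
    exact sub_eq_zero.2 hp_heat
  have hidentity := (deriv_sub_lap_slice hw₂).trans
    ((heatOp_congr hw).trans (heatOp_fisherDensity hu hpos.ne' hheatOp))
  simp only [← hess_slice (hu.of_le (by norm_num)), ← pdv_slice (hu.differentiableAt (by simp))]
    at hidentity
  refine ⟨hidentity, hidentity.trans_le (mul_nonpos_of_nonpos_of_nonneg ?_ ?_)⟩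
  · exact neg_nonpos.2 (by positivity)
  · positivity

/-- Flat-space Bochner-type identity: for a smooth positive solution of the heat
equation on `U × (a,b)`,
`(∂/∂t - Δ)(‖∇u‖²/u) = -(2/u) ‖∇²u - (∇u ⊗ ∇u)/u‖²_F ≤ 0`. -/
theorem stmt4 (n : ℕ) (U : Set (EuclideanSpace ℝ (Fin n))) (hU : IsOpen U)
    (a b : ℝ) (u : EuclideanSpace ℝ (Fin n) → ℝ → ℝ)
    (hsmooth : ContDiffOn ℝ (⊤ : ℕ∞) (fun p : (EuclideanSpace ℝ (Fin n)) × ℝ => u p.1 p.2)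
      (U ×ˢ Set.Ioo a b))
    (hpos : ∀ y ∈ U, ∀ t ∈ Set.Ioo a b, 0 < u y t)
    (hheat : ∀ y ∈ U, ∀ t ∈ Set.Ioo a b,
      deriv (fun s => u y s) t = lap (fun z => u z t) y) :
    ∀ y ∈ U, ∀ t ∈ Set.Ioo a b,
      (deriv (fun s => ‖gradient (fun z => u z s) y‖ ^ 2 / u y s) t
          - lap (fun z => ‖gradient (fun z' => u z' t) z‖ ^ 2 / u z t) y
        = -(2 / u y t) * ∑ i, ∑ j,
            (hess i j (fun z => u z t) y
              - pdv i (fun z => u z t) y * pdv j (fun z => u z t) y / u y t) ^ 2)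
      ∧ deriv (fun s => ‖gradient (fun z => u z s) y‖ ^ 2 / u y s) t
          - lap (fun z => ‖gradient (fun z' => u z' t) z‖ ^ 2 / u z t) y ≤ 0 := by
  intro y hy t ht
  have hnhds : U ×ˢ Set.Ioo a b ∈ 𝓝 (y, t) := (hU.prod isOpen_Ioo).mem_nhds ⟨hy, ht⟩
  exact stmt4_general (contDiffAt_infty.1 (hsmooth.contDiffAt hnhds) 3) (hpos y hy t ht)
    (eventually_of_mem hnhds fun p hp => hheat p.1 hp.1 p.2 hp.2)
end

section
/- Let T > 0 and let Υ : ℝⁿ × [0,T] → Sym(n,ℝ) be a smooth family of symmetric n×n matrices such that Υ and its first and second spatial derivatives are bounded, each entry satisfies the heat equation ∂Υ_{ij}/∂t = ΔΥ_{ij}, and Υ(·,0) is positive semidefinite at every point. Then for every (x,t) ∈ ℝⁿ × (0,T] and every vector V ∈ ℝⁿ: Σ_{i,j} ∂_i ∂_j Υ_{ij}(x,t) + 2 Σ_{i,j} (∂_i Υ_{ij}(x,t)) V_j + Σ_{i,j} Υ_{ij}(x,t) V_i V_j + (tr Υ(x,t))/t ≥ 0. -/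
open Real MeasureTheory Filter Set

/-!
If `u` solves the heat equation, so does its Galilean boost
`exp (⟪ξ, x - c⟫ + t‖ξ‖²) * u (x + 2tξ, t)`, whose initial value is `exp ⟪ξ, x - c⟫ * u (x, 0)`.
Replace each entry `Υᵢⱼ` by its mixed second difference with respect to `ξ` at `0` in the directions
`h eᵢ` and `h eⱼ`, and add up. The initial value of this sum `Φ_h` is the quadratic form of
`Υ (·, 0)` at the vector with components `exp (h ⟪eᵢ, x - c⟫) - 1`, so `Φ_h ≥ 0` by the maximum
principle. Since `Φ_0 = 0`, the function `h ↦ Φ_h (x, t)` has a minimum at `0` and a nonnegative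
second derivative there; for `c = x - 2tV` this derivative is `8t²` times the Harnack quantity, with
`tr Υ / (2t)` in place of `tr Υ / t`.
-/

section HeatEquation

open InnerProductSpace Function Asymptotics
open scoped Laplacian Topology

theorem nonneg_of_forall_pos_nonneg_add_mul {a b : ℝ} (h : ∀ ε > 0, 0 ≤ a + ε * b) : 0 ≤ a := by
  have hlim : Tendsto (fun ε : ℝ => a + ε * b) (𝓝[>] 0) (𝓝 a) :=
    Continuous.tendsto' (by fun_prop) 0 a (by simp) |>.mono_left nhdsWithin_le_nhds
  exact ge_of_tendsto hlim (eventually_mem_nhdsWithin.mono h)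

theorem deriv_nonpos_of_isMinOn_Icc {f : ℝ → ℝ} {a b : ℝ} (hab : a < b)
    (hf : DifferentiableAt ℝ f b) (hmin : IsMinOn f (Icc a b) b) : deriv f b ≤ 0 := by
  have hcone : a - b ∈ posTangentConeAt (Icc a b) b :=
    sub_mem_posTangentConeAt_of_segment_subset (by rw [segment_symm, segment_eq_Icc hab.le])
  have hslope : 0 ≤ (a - b) * deriv f b := by
    simpa using hmin.localize.hasFDerivWithinAt_nonneg
      hf.hasDerivAt.hasFDerivAt.hasFDerivWithinAt hcone
  exact nonpos_of_mul_nonneg_right hslope (sub_neg.2 hab)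

theorem iteratedDeriv_two_nonneg_of_isLocalMin {f : ℝ → ℝ} {a : ℝ} (hmin : IsLocalMin f a)
    (hf : ContinuousAt f a) : 0 ≤ iteratedDeriv 2 f a := by
  rw [iteratedDeriv_succ, iteratedDeriv_one]
  by_contra! hneg
  have hmax : IsLocalMax f a := isLocalMax_of_deriv_deriv_neg hneg hmin.deriv_eq_zero hf
  have hconst : f =ᶠ[𝓝 a] fun _ => f a := by
    filter_upwards [hmin, hmax] with y h₁ h₂ using le_antisymm h₂ h₁
  simp [hconst.deriv.deriv_eq] at hneg

theorem iteratedDeriv_two_exp_mul {g : ℝ → ℝ} (hg : ContDiff ℝ 2 g) (α β : ℝ) :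
    iteratedDeriv 2 (fun s => exp (α * s + β * s ^ 2) * g s) 0 =
      (α ^ 2 + 2 * β) * g 0 + 2 * α * deriv g 0 + iteratedDeriv 2 g 0 := by
  have hg₁ (s : ℝ) : HasDerivAt g (deriv g s) s := (hg.differentiable (by simp) s).hasDerivAt
  have hg₂ : HasDerivAt (deriv g) (deriv (deriv g) 0) 0 :=
    ((contDiff_succ_iff_deriv (n := 1).1 hg).2.2.differentiable (by simp) 0).hasDerivAt
  have hlin : HasDerivAt (fun s => α + 2 * β * s) (2 * β) 0 := by
    simpa using ((hasDerivAt_id (0 : ℝ)).const_mul (2 * β)).const_add α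
  have hexp (s : ℝ) : HasDerivAt (fun s => exp (α * s + β * s ^ 2))
      (exp (α * s + β * s ^ 2) * (α + 2 * β * s)) s :=
    (((hasDerivAt_id' s).const_mul α).fun_add ((hasDerivAt_pow 2 s).const_mul β)).exp.congr_deriv
      (by push_cast; ring)
  have hderiv : deriv (fun s => exp (α * s + β * s ^ 2) * g s) =
      fun s => exp (α * s + β * s ^ 2) * ((α + 2 * β * s) * g s + deriv g s) := by
    funext s
    rw [((hexp s).fun_mul (hg₁ s)).deriv]
    ring
  rw [iteratedDeriv_succ, iteratedDeriv_one, hderiv,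
    ((hexp 0).fun_mul ((hlin.fun_mul (hg₁ 0)).fun_add hg₂)).deriv, iteratedDeriv_succ,
    iteratedDeriv_one, show α * 0 + β * (0 : ℝ) ^ 2 = 0 by ring, exp_zero]
  ring

section Calculus

variable {E : Type*} [NormedAddCommGroup E] [NormedSpace ℝ E]

theorem hasDerivAt_comp_add_smul {f : E → ℝ} {x v : E} {s : ℝ}
    (hf : DifferentiableAt ℝ f (x + s • v)) :
    HasDerivAt (fun s : ℝ => f (x + s • v)) (fderiv ℝ f (x + s • v) v) s := by
  have hline : HasDerivAt (fun s : ℝ => x + s • v) v s := by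
    simpa using ((hasDerivAt_id s).smul_const v).const_add x
  exact hf.hasFDerivAt.comp_hasDerivAt s hline

theorem iteratedDeriv_two_comp_add_smul {f : E → ℝ} (hf : ContDiff ℝ 2 f) (x v : E) :
    iteratedDeriv 2 (fun s : ℝ => f (x + s • v)) 0 = fderiv ℝ (fderiv ℝ f) x v v := by
  have hf' : Differentiable ℝ (fderiv ℝ f) :=
    (hf.fderiv_right (m := 1) le_rfl).differentiable (by simp)
  have hderiv : deriv (fun s : ℝ => f (x + s • v)) = fun s => fderiv ℝ f (x + s • v) v :=
    funext fun s => (hasDerivAt_comp_add_smul (hf.differentiable (by simp) _)).deriv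
  rw [iteratedDeriv_succ, iteratedDeriv_one, hderiv,
    (hasDerivAt_comp_add_smul (f := fun y => fderiv ℝ f y v) (by fun_prop)).deriv,
    fderiv_clm_apply (hf' _) (differentiableAt_const v)]
  simp

theorem iteratedDeriv_two_exp_mul_comp_add_smul {f : E → ℝ} (hf : ContDiff ℝ 2 f) (x v : E)
    (α β : ℝ) :
    iteratedDeriv 2 (fun s => exp (α * s + β * s ^ 2) * f (x + s • v)) 0 =
      (α ^ 2 + 2 * β) * f x + 2 * α * fderiv ℝ f x v + fderiv ℝ (fderiv ℝ f) x v v := by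
  have hline : ContDiff ℝ 2 fun s : ℝ => f (x + s • v) := hf.comp (by fun_prop)
  rw [iteratedDeriv_two_exp_mul hline, iteratedDeriv_two_comp_add_smul hf,
    (hasDerivAt_comp_add_smul (hf.differentiable (by simp) _)).deriv, zero_smul, add_zero]

theorem fderiv_fderiv_nonneg_of_isLocalMin {f : E → ℝ} {x : E} (hf : ContDiff ℝ 2 f)
    (hmin : IsLocalMin f x) (v : E) : 0 ≤ fderiv ℝ (fderiv ℝ f) x v v := by
  have hline : Continuous fun s : ℝ => x + s • v := by fun_prop
  rw [← iteratedDeriv_two_comp_add_smul hf]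
  refine iteratedDeriv_two_nonneg_of_isLocalMin ?_ (hf.continuous.comp hline).continuousAt
  exact IsLocalMin.comp_continuous (g := fun s : ℝ => x + s • v) (b := 0) (by simpa using hmin)
    hline.continuousAt

theorem hasDerivAt_uncurry_comp {u : E → ℝ → ℝ} {γ : ℝ → E} {γ' : E} {t : ℝ}
    (hu : DifferentiableAt ℝ (uncurry u) (γ t, t)) (hγ : HasDerivAt γ γ' t) :
    HasDerivAt (fun s => u (γ s) s)
      (fderiv ℝ (fun y => u y t) (γ t) γ' + deriv (u (γ t)) t) t := by
  have hspace : fderiv ℝ (fun y => u y t) (γ t) γ' = fderiv ℝ (uncurry u) (γ t, t) (γ', 0) := by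
    have hslice : HasFDerivAt (fun y => u y t) _ (γ t) :=
      hu.hasFDerivAt.comp (f := fun y => (y, t)) (γ t) (hasFDerivAt_prodMk_left (γ t) t)
    simp [hslice.fderiv]
  have htime : deriv (u (γ t)) t = fderiv ℝ (uncurry u) (γ t, t) (0, 1) :=
    (hu.hasFDerivAt.comp_hasDerivAt t ((hasDerivAt_const t (γ t)).prodMk (hasDerivAt_id t))).deriv
  rw [hspace, htime, ← map_add]
  simpa [comp_def] using
    hu.hasFDerivAt.comp_hasDerivAt (f := fun s => (γ s, s)) t (hγ.prodMk (hasDerivAt_id t))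

end Calculus

variable {E : Type*} [NormedAddCommGroup E] [InnerProductSpace ℝ E] {T t : ℝ}

/-- The Galilean boost of `u` with velocity parameter `ξ`, normalised at the point `c`. It maps
heat solutions to heat solutions and multiplies the initial data by `exp ⟪ξ, x - c⟫`. -/
noncomputable def galileanBoost (c ξ : E) (u : E → ℝ → ℝ) (x : E) (t : ℝ) : ℝ :=
  exp (inner ℝ ξ (x - c) + t * ‖ξ‖ ^ 2) * u (x + (2 * t) • ξ) t

theorem galileanBoost_apply_zero (c ξ : E) (u : E → ℝ → ℝ) (x : E) :
    galileanBoost c ξ u x 0 = exp (inner ℝ ξ (x - c)) * u x 0 := by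
  simp [galileanBoost]

theorem galileanBoost_zero (c : E) (u : E → ℝ → ℝ) : galileanBoost c 0 u = u := by
  ext x t
  simp [galileanBoost]

theorem galileanBoost_sub_smul (u : E → ℝ → ℝ) (V x ξ : E) (t s : ℝ) :
    galileanBoost (x - (2 * t) • V) (s • ξ) u x t =
      exp (2 * t * inner ℝ ξ V * s + t * ‖ξ‖ ^ 2 * s ^ 2) * u (x + s • (2 * t) • ξ) t := by
  rw [galileanBoost, sub_sub_cancel, real_inner_smul_left, real_inner_smul_right, norm_smul,
    mul_pow, norm_eq_abs, sq_abs, smul_comm s]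
  ring_nf

theorem contDiff_galileanBoost_smul {u : E → ℝ → ℝ} (hu : ContDiff ℝ 2 fun y => u y t)
    (V x ξ : E) : ContDiff ℝ 2 fun s : ℝ => galileanBoost (x - (2 * t) • V) (s • ξ) u x t := by
  simp_rw [galileanBoost_sub_smul]
  exact ContDiff.mul (by fun_prop) (hu.comp (by fun_prop))

/-- The bilinear form in `v` and `w` whose sum over the entries `f = Υᵢⱼ` and `(v, w) = (eᵢ, eⱼ)`
is the Harnack quantity of the tensor `Υ` at time `t` and at the vector `V`, with the constant
`1 / (2 * t)` in front of the trace term. -/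
noncomputable def harnackForm (t : ℝ) (f : E → ℝ) (V x v w : E) : ℝ :=
  fderiv ℝ (fderiv ℝ f) x v w + inner ℝ v V * fderiv ℝ f x w + inner ℝ w V * fderiv ℝ f x v +
    inner ℝ v V * inner ℝ w V * f x + inner ℝ v w * f x / (2 * t)

theorem harnackForm_add_add_self {f : E → ℝ} (hf : ContDiff ℝ 2 f) (t : ℝ) (V x v w : E) :
    harnackForm t f V x (v + w) (v + w) =
      harnackForm t f V x v v + harnackForm t f V x w w + 2 * harnackForm t f V x v w := by
  have hsymm : fderiv ℝ (fderiv ℝ f) x w v = fderiv ℝ (fderiv ℝ f) x v w :=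
    (hf.contDiffAt.isSymmSndFDerivAt (by simp)).eq w v
  simp only [harnackForm, map_add, add_apply, inner_add_left, inner_add_right, hsymm,
    real_inner_comm v w]
  ring

theorem iteratedDeriv_two_galileanBoost_smul {u : E → ℝ → ℝ} (hu : ContDiff ℝ 2 fun y => u y t)
    (ht : t ≠ 0) (V x ξ : E) :
    iteratedDeriv 2 (fun s : ℝ => galileanBoost (x - (2 * t) • V) (s • ξ) u x t) 0 =
      4 * t ^ 2 * harnackForm t (fun y => u y t) V x ξ ξ := by
  simp_rw [galileanBoost_sub_smul]
  rw [iteratedDeriv_two_exp_mul_comp_add_smul hu]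
  simp only [harnackForm, map_smul, smul_apply, smul_eq_mul, real_inner_self_eq_norm_sq]
  field_simp
  ring

/-- The mixed second difference of `ξ ↦ galileanBoost c ξ u` at `ξ = 0` in the directions `v` and
`w` (the boost at `ξ = 0` is `u` itself). On the initial data it acts as multiplication by
`(exp ⟪v, x - c⟫ - 1) * (exp ⟪w, x - c⟫ - 1)`. -/
noncomputable def boostDifference (c v w : E) (u : E → ℝ → ℝ) : E → ℝ → ℝ :=
  galileanBoost c (v + w) u - galileanBoost c v u - galileanBoost c w u + u

theorem boostDifference_apply_zero (c v w : E) (u : E → ℝ → ℝ) (x : E) :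
    boostDifference c v w u x 0 =
      u x 0 * (exp (inner ℝ v (x - c)) - 1) * (exp (inner ℝ w (x - c)) - 1) := by
  simp only [boostDifference, Pi.add_apply, Pi.sub_apply, galileanBoost_apply_zero, inner_add_left,
    exp_add]
  ring

theorem boostDifference_zero_zero (c : E) (u : E → ℝ → ℝ) : boostDifference c 0 0 u = 0 := by
  simp [boostDifference, galileanBoost_zero]

theorem contDiff_boostDifference_smul {u : E → ℝ → ℝ} (hu : ContDiff ℝ 2 fun y => u y t)
    (V x v w : E) :
    ContDiff ℝ 2 fun s : ℝ => boostDifference (x - (2 * t) • V) (s • v) (s • w) u x t := by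
  simp only [boostDifference, ← smul_add, Pi.add_apply, Pi.sub_apply]
  have hC := contDiff_galileanBoost_smul hu V x
  exact (((hC (v + w)).sub (hC v)).sub (hC w)).add contDiff_const

theorem iteratedDeriv_two_boostDifference_smul {u : E → ℝ → ℝ} (hu : ContDiff ℝ 2 fun y => u y t)
    (ht : t ≠ 0) (V x v w : E) :
    iteratedDeriv 2 (fun s : ℝ => boostDifference (x - (2 * t) • V) (s • v) (s • w) u x t) 0 =
      8 * t ^ 2 * harnackForm t (fun y => u y t) V x v w := by
  have hC (ξ : E) := (contDiff_galileanBoost_smul hu V x ξ).contDiffAt (x := 0)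
  simp only [boostDifference, ← smul_add, Pi.add_apply, Pi.sub_apply]
  rw [iteratedDeriv_fun_add (((hC _).sub (hC _)).sub (hC _)) contDiffAt_const,
    iteratedDeriv_fun_sub ((hC _).sub (hC _)) (hC _), iteratedDeriv_fun_sub (hC _) (hC _)]
  simp only [iteratedDeriv_two_galileanBoost_smul hu ht, harnackForm_add_add_self hu,
    iteratedDeriv_const, OfNat.ofNat_ne_zero, if_false]
  ring

theorem fderiv_fderiv_exp_inner_mul {f : E → ℝ} (hf : ContDiff ℝ 2 f) (c a ξ x v : E) (k : ℝ) :
    fderiv ℝ (fderiv ℝ fun y => exp (inner ℝ ξ (y - c) + k) * f (y + a)) x v v =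
      exp (inner ℝ ξ (x - c) + k) * (inner ℝ ξ v ^ 2 * f (x + a) +
        2 * (inner ℝ ξ v * fderiv ℝ f (x + a) v) + fderiv ℝ (fderiv ℝ f) (x + a) v v) := by
  have hprod : ContDiff ℝ 2 fun y => exp (inner ℝ ξ (y - c) + k) * f (y + a) :=
    ((contDiff_const.inner ℝ (contDiff_id.sub contDiff_const)).add contDiff_const).exp.mul
      (hf.comp (contDiff_id.add contDiff_const))
  have hline (s : ℝ) : exp (inner ℝ ξ (x + s • v - c) + k) * f (x + s • v + a) =
      exp (inner ℝ ξ (x - c) + k) * (exp (inner ℝ ξ v * s + 0 * s ^ 2) * f (x + a + s • v)) := by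
    rw [← mul_assoc, ← exp_add, add_right_comm x, add_sub_right_comm, inner_add_right,
      real_inner_smul_right]
    ring_nf
  rw [← iteratedDeriv_two_comp_add_smul hprod]
  simp_rw [hline]
  rw [iteratedDeriv_const_mul_field, iteratedDeriv_two_exp_mul_comp_add_smul hf]
  ring

variable [FiniteDimensional ℝ E]

theorem laplacian_eq_sum_fderiv_fderiv {ι : Type*} [Fintype ι] (b : OrthonormalBasis ι ℝ E)
    (f : E → ℝ) (x : E) : Δ f x = ∑ i, fderiv ℝ (fderiv ℝ f) x (b i) (b i) := by
  simp [laplacian_eq_iteratedFDeriv_orthonormalBasis f b, iteratedFDeriv_two_apply]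

theorem laplacian_nonneg_of_isLocalMin {f : E → ℝ} {x : E} (hf : ContDiff ℝ 2 f)
    (hmin : IsLocalMin f x) : 0 ≤ Δ f x := by
  rw [laplacian_eq_sum_fderiv_fderiv (stdOrthonormalBasis ℝ E)]
  exact Finset.sum_nonneg fun i _ => fderiv_fderiv_nonneg_of_isLocalMin hf hmin _

theorem laplacian_exp_inner_mul {f : E → ℝ} (hf : ContDiff ℝ 2 f) (c a ξ x : E) (k : ℝ) :
    Δ (fun y => exp (inner ℝ ξ (y - c) + k) * f (y + a)) x =
      exp (inner ℝ ξ (x - c) + k) *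
        (‖ξ‖ ^ 2 * f (x + a) + 2 * fderiv ℝ f (x + a) ξ + Δ f (x + a)) := by
  set b := stdOrthonormalBasis ℝ E
  have hgrad : fderiv ℝ f (x + a) ξ = ∑ i, inner ℝ ξ (b i) * fderiv ℝ f (x + a) (b i) := by
    conv_lhs => rw [← b.sum_repr' ξ]
    simp [real_inner_comm]
  rw [laplacian_eq_sum_fderiv_fderiv b, laplacian_eq_sum_fderiv_fderiv b, hgrad,
    ← b.sum_sq_inner_left ξ]
  simp_rw [fderiv_fderiv_exp_inner_mul hf, ← Finset.mul_sum, Finset.sum_add_distrib,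
    Finset.sum_mul, ← Finset.mul_sum]

/-- `u : E → ℝ → ℝ` is a classical solution of the heat equation `∂ₜu = Δu` on `E × (0, T)`,
continuous up to time `0`, `C²` up to time `T`, and of at most exponential growth in space,
uniformly in time; this growth class is preserved by Galilean boosts. -/
structure IsHeatSolution (T : ℝ) (u : E → ℝ → ℝ) : Prop where
  continuousOn : ContinuousOn (uncurry u) (univ ×ˢ Icc 0 T)
  contDiffOn : ContDiffOn ℝ 2 (uncurry u) (univ ×ˢ Ioc 0 T)
  deriv_eq_laplacian : ∀ x, ∀ t ∈ Ioo 0 T, deriv (u x) t = Δ (fun y => u y t) x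
  isBigO_exp : ∃ A : ℝ, uncurry u =O[𝓟 (univ ×ˢ Icc 0 T)] fun p => exp (A * ‖p.1‖)

namespace IsHeatSolution

variable {u v : E → ℝ → ℝ}

theorem contDiff_slice (hu : IsHeatSolution T u) (ht : t ∈ Ioc 0 T) :
    ContDiff ℝ 2 fun y => u y t := by
  rw [← contDiffOn_univ]
  exact hu.contDiffOn.comp (contDiff_id.prodMk contDiff_const).contDiffOn fun y _ => ⟨trivial, ht⟩

theorem contDiffAt (hu : IsHeatSolution T u) (x : E) (ht : t ∈ Ioo 0 T) :
    ContDiffAt ℝ 2 (uncurry u) (x, t) :=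
  hu.contDiffOn.contDiffAt
    (prod_mem_nhds univ_mem (mem_of_superset (Ioo_mem_nhds ht.1 ht.2) Ioo_subset_Ioc_self))

theorem differentiableAt (hu : IsHeatSolution T u) (x : E) (ht : t ∈ Ioo 0 T) :
    DifferentiableAt ℝ (uncurry u) (x, t) :=
  (hu.contDiffAt x ht).differentiableAt two_ne_zero

theorem differentiableAt_time (hu : IsHeatSolution T u) (x : E) (ht : t ∈ Ioo 0 T) :
    DifferentiableAt ℝ (u x) t :=
  (hu.differentiableAt x ht).comp (f := fun s : ℝ => (x, s)) t (by fun_prop)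

theorem exists_abs_le_mul_exp (hu : IsHeatSolution T u) :
    ∃ A C : ℝ, 0 ≤ A ∧ 0 ≤ C ∧ ∀ x, ∀ t ∈ Icc 0 T, |u x t| ≤ C * exp (A * ‖x‖) := by
  obtain ⟨A, hA⟩ := hu.isBigO_exp
  obtain ⟨C, hC₀, hC⟩ := hA.exists_nonneg
  refine ⟨|A|, C, abs_nonneg A, hC₀, fun x t ht => ?_⟩
  have hx : |u x t| ≤ C * exp (A * ‖x‖) := by
    simpa using isBigOWith_principal.1 hC (x, t) ⟨trivial, ht⟩
  exact hx.trans (by gcongr; exact le_abs_self A)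

theorem const (T c : ℝ) : IsHeatSolution T fun (_ : E) _ => c where
  continuousOn := continuousOn_const
  contDiffOn := contDiffOn_const
  deriv_eq_laplacian x t _ := by simp
  isBigO_exp := ⟨0, by simpa [uncurry_def] using isBigO_const_const c (one_ne_zero (α := ℝ)) _⟩

theorem add (hu : IsHeatSolution T u) (hv : IsHeatSolution T v) : IsHeatSolution T (u + v) where
  continuousOn := hu.continuousOn.add hv.continuousOn
  contDiffOn := hu.contDiffOn.add hv.contDiffOn
  deriv_eq_laplacian x t ht := by
    have ht' := Ioo_subset_Ioc_self ht
    calc deriv (u x + v x) t = deriv (u x) t + deriv (v x) t :=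
          deriv_add (hu.differentiableAt_time x ht) (hv.differentiableAt_time x ht)
      _ = Δ (fun y => u y t) x + Δ (fun y => v y t) x := by
          rw [hu.deriv_eq_laplacian x t ht, hv.deriv_eq_laplacian x t ht]
      _ = Δ ((fun y => u y t) + fun y => v y t) x :=
          ((hu.contDiff_slice ht').contDiffAt.laplacian_add
            (hv.contDiff_slice ht').contDiffAt).symm
  isBigO_exp := by
    obtain ⟨A, hA⟩ := hu.isBigO_exp
    obtain ⟨B, hB⟩ := hv.isBigO_exp
    have hexp {a : ℝ} (ha : a ≤ max A B) : (fun p : E × ℝ => exp (a * ‖p.1‖))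
        =O[𝓟 (univ ×ˢ Icc 0 T)] fun p => exp (max A B * ‖p.1‖) :=
      .of_norm_le fun p => by simp only [norm_eq_abs, abs_exp]; gcongr
    exact ⟨max A B, (hA.trans (hexp (le_max_left A B))).add (hB.trans (hexp (le_max_right A B)))⟩

theorem smul (a : ℝ) (hu : IsHeatSolution T u) : IsHeatSolution T (a • u) where
  continuousOn := hu.continuousOn.const_smul a
  contDiffOn := hu.contDiffOn.const_smul a
  deriv_eq_laplacian x t ht := by
    calc deriv (a • u x) t = a • deriv (u x) t :=
          deriv_const_smul a (hu.differentiableAt_time x ht)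
      _ = a • Δ (fun y => u y t) x := by rw [hu.deriv_eq_laplacian x t ht]
      _ = Δ (a • fun y => u y t) x :=
          (laplacian_smul a (hu.contDiff_slice (Ioo_subset_Ioc_self ht)).contDiffAt).symm
  isBigO_exp := hu.isBigO_exp.imp fun _ hA => hA.const_smul_left a

end IsHeatSolution

variable (E T) in
/-- The heat solutions of `IsHeatSolution` as a linear subspace of all functions of space and
time, so that closure under linear combinations comes from the submodule API. -/
def heatSolutions : Submodule ℝ (E → ℝ → ℝ) where
  carrier := {u | IsHeatSolution T u}
  add_mem' := IsHeatSolution.add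
  zero_mem' := IsHeatSolution.const T 0
  smul_mem' a _ := IsHeatSolution.smul a

protected theorem IsHeatSolution.galileanBoost {u : E → ℝ → ℝ} (hu : IsHeatSolution T u) (c ξ : E) :
    IsHeatSolution T (galileanBoost c ξ u) where
  continuousOn := by
    refine ContinuousOn.mul (by fun_prop) (hu.continuousOn.comp
      (f := fun p : E × ℝ => (p.1 + (2 * p.2) • ξ, p.2)) (by fun_prop) ?_)
    exact fun p hp => ⟨trivial, hp.2⟩
  contDiffOn := by
    have hcurve : ContDiff ℝ 2 fun p : E × ℝ => (p.1 + (2 * p.2) • ξ, p.2) := by fun_prop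
    have hexp : ContDiff ℝ 2 fun p : E × ℝ => exp (inner ℝ ξ (p.1 - c) + p.2 * ‖ξ‖ ^ 2) :=
      ((contDiff_const.inner ℝ (contDiff_fst.sub contDiff_const)).add
        (contDiff_snd.mul contDiff_const)).exp
    exact hexp.contDiffOn.mul (hu.contDiffOn.comp hcurve.contDiffOn fun p hp => ⟨trivial, hp.2⟩)
  deriv_eq_laplacian x t ht := by
    have hcurve : HasDerivAt (fun s : ℝ => x + (2 * s) • ξ) ((2 : ℝ) • ξ) t := by
      simpa using (((hasDerivAt_id t).const_mul 2).smul_const ξ).const_add x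
    have hexp : HasDerivAt (fun s : ℝ => exp (inner ℝ ξ (x - c) + s * ‖ξ‖ ^ 2))
        (exp (inner ℝ ξ (x - c) + t * ‖ξ‖ ^ 2) * ‖ξ‖ ^ 2) t := by
      simpa using (((hasDerivAt_id t).mul_const (‖ξ‖ ^ 2)).const_add (inner ℝ ξ (x - c))).exp
    have htime := hexp.fun_mul (hasDerivAt_uncurry_comp (hu.differentiableAt _ ht) hcurve)
    calc deriv (galileanBoost c ξ u x) t = _ := htime.deriv
      _ = _ := by rw [hu.deriv_eq_laplacian _ t ht, map_smul, smul_eq_mul]; ring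
      _ = Δ (fun y => galileanBoost c ξ u y t) x :=
        (laplacian_exp_inner_mul (hu.contDiff_slice (Ioo_subset_Ioc_self ht)) c _ ξ x _).symm
  isBigO_exp := by
    obtain ⟨A, C, hA, hC, hbound⟩ := hu.exists_abs_le_mul_exp
    refine ⟨‖ξ‖ + A, .of_bound (C * exp (‖ξ‖ * ‖c‖ + T * ‖ξ‖ ^ 2 + A * (2 * T * ‖ξ‖))) ?_⟩
    filter_upwards [mem_principal_self _] with ⟨x, t⟩ hp
    obtain ⟨ht₀, htT⟩ : t ∈ Icc 0 T := hp.2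
    have hinner : inner ℝ ξ (x - c) ≤ ‖ξ‖ * (‖x‖ + ‖c‖) :=
      (real_inner_le_norm _ _).trans (by gcongr; exact norm_sub_le x c)
    have hshift : ‖x + (2 * t) • ξ‖ ≤ ‖x‖ + 2 * T * ‖ξ‖ :=
      (norm_add_le _ _).trans (by rw [norm_smul, norm_of_nonneg (by positivity)]; gcongr)
    calc ‖galileanBoost c ξ u x t‖
        = exp (inner ℝ ξ (x - c) + t * ‖ξ‖ ^ 2) * |u (x + (2 * t) • ξ) t| := by
          rw [galileanBoost, norm_mul, norm_of_nonneg (exp_pos _).le, norm_eq_abs]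
      _ ≤ exp (‖ξ‖ * (‖x‖ + ‖c‖) + T * ‖ξ‖ ^ 2) * (C * exp (A * (‖x‖ + 2 * T * ‖ξ‖))) := by
          gcongr
          exact (hbound _ t hp.2).trans (by gcongr)
      _ = C * exp (‖ξ‖ * ‖c‖ + T * ‖ξ‖ ^ 2 + A * (2 * T * ‖ξ‖)) * ‖exp ((‖ξ‖ + A) * ‖x‖)‖ := by
          rw [norm_of_nonneg (exp_pos _).le, mul_left_comm, mul_assoc C, ← exp_add, ← exp_add]
          ring_nf

protected theorem IsHeatSolution.boostDifference {u : E → ℝ → ℝ} (hu : IsHeatSolution T u)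
    (c v w : E) : IsHeatSolution T (boostDifference c v w u) :=
  (heatSolutions E T).add_mem ((heatSolutions E T).sub_mem ((heatSolutions E T).sub_mem
    (hu.galileanBoost c (v + w)) (hu.galileanBoost c v)) (hu.galileanBoost c w)) hu

theorem exists_isHeatSolution_exp_le (T A : ℝ) : ∃ ψ : E → ℝ → ℝ, IsHeatSolution T ψ ∧
    ∀ x, ∀ t, 0 ≤ t → exp (A * ‖x‖) ≤ ψ x t := by
  set b := stdOrthonormalBasis ℝ E
  set ξ : (Fin (Module.finrank ℝ E) → SignType) → E := fun σ => |A| • ∑ k, (σ k : ℝ) • b k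
  refine ⟨∑ σ, galileanBoost 0 (ξ σ) fun _ _ => 1,
    (heatSolutions E T).sum_mem fun σ _ => (IsHeatSolution.const T 1).galileanBoost 0 (ξ σ),
    fun x t ht => ?_⟩
  set σ : Fin (Module.finrank ℝ E) → SignType := fun k => SignType.sign (inner ℝ (b k) x)
  have hnorm : ‖x‖ ≤ ∑ k, |inner ℝ (b k) x| := by
    conv_lhs => rw [← b.sum_repr' x]
    exact (norm_sum_le _ _).trans_eq (by simp [norm_smul])
  have hinner : inner ℝ (ξ σ) x = |A| * ∑ k, |inner ℝ (b k) x| := by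
    simp [ξ, σ, sum_inner, real_inner_smul_left, sign_mul_self]
  calc exp (A * ‖x‖) ≤ exp (inner ℝ (ξ σ) (x - 0) + t * ‖ξ σ‖ ^ 2) := by
        rw [sub_zero, hinner]
        gcongr
        refine le_add_of_le_of_nonneg ?_ (by positivity)
        gcongr
        exact le_abs_self A
    _ = galileanBoost 0 (ξ σ) (fun _ _ => 1) x t := by rw [galileanBoost, mul_one]
    _ ≤ ∑ σ, galileanBoost 0 (ξ σ) (fun _ _ => 1) x t :=
        Finset.single_le_sum (f := fun σ => galileanBoost 0 (ξ σ) (fun _ _ => 1) x t)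
          (fun σ _ => mul_nonneg (exp_pos _).le zero_le_one) (Finset.mem_univ σ)
    _ = (∑ σ, galileanBoost 0 (ξ σ) fun _ _ => 1) x t := by simp

namespace IsHeatSolution

variable {u : E → ℝ → ℝ}

theorem not_isMinOn_add_mul (hu : IsHeatSolution T u) {δ : ℝ} (hδ : 0 < δ) {x : E} {s : Set E}
    (hs : s ∈ 𝓝 x) (ht : t ∈ Ioo 0 T) :
    ¬ IsMinOn (fun p : E × ℝ => u p.1 p.2 + δ * p.2) (s ×ˢ Icc 0 t) (x, t) := by
  intro hmin
  have hspace : 0 ≤ Δ (fun y => u y t) x := by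
    refine laplacian_nonneg_of_isLocalMin (hu.contDiff_slice (Ioo_subset_Ioc_self ht)) ?_
    filter_upwards [hs] with y hy
    simpa using hmin (show (y, t) ∈ s ×ˢ Icc 0 t from ⟨hy, right_mem_Icc.2 ht.1.le⟩)
  have hderiv : HasDerivAt (fun r => u x r + δ * r) (deriv (u x) t + δ) t := by
    simpa using (hu.differentiableAt_time x ht).hasDerivAt.fun_add
      ((hasDerivAt_id t).const_mul δ)
  have htime : deriv (u x) t + δ ≤ 0 := by
    rw [← hderiv.deriv]
    exact deriv_nonpos_of_isMinOn_Icc ht.1 hderiv.differentiableAt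
      fun r hr => hmin (show (x, r) ∈ s ×ˢ Icc 0 t from ⟨mem_of_mem_nhds hs, hr⟩)
  rw [hu.deriv_eq_laplacian x t ht] at htime
  linarith

theorem nonneg_add_mul_of_nonneg_of_le_norm (hu : IsHeatSolution T u) (h₀ : ∀ x, 0 ≤ u x 0)
    {R : ℝ} (hR : ∀ x, R ≤ ‖x‖ → ∀ t ∈ Icc 0 T, 0 ≤ u x t) {δ : ℝ} (hδ : 0 < δ) (x : E)
    (ht : t ∈ Ico 0 T) : 0 ≤ u x t + δ * t := by
  obtain hx | hx := le_or_gt R ‖x‖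
  · exact add_nonneg (hR x hx t (Ico_subset_Icc_self ht)) (mul_nonneg hδ.le ht.1)
  have hsub : Metric.closedBall (0 : E) R ×ˢ Icc 0 t ⊆ univ ×ˢ Icc 0 T :=
    prod_mono (subset_univ _) (Icc_subset_Icc_right ht.2.le)
  have hxt : (x, t) ∈ Metric.closedBall (0 : E) R ×ˢ Icc 0 t :=
    ⟨mem_closedBall_zero_iff.2 hx.le, right_mem_Icc.2 ht.1⟩
  obtain ⟨⟨y, s⟩, ⟨-, hs⟩, hmin⟩ :=
    ((isCompact_closedBall (0 : E) R).prod isCompact_Icc).exists_isMinOn ⟨_, hxt⟩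
      (f := fun p => u p.1 p.2 + δ * p.2) ((hu.continuousOn.mono hsub).add (by fun_prop))
  refine le_trans ?_ (hmin hxt)
  obtain hy | hy := le_or_gt R ‖y‖
  · exact add_nonneg (hR y hy s ⟨hs.1, hs.2.trans ht.2.le⟩) (mul_nonneg hδ.le hs.1)
  obtain rfl | hs₀ := hs.1.eq_or_lt
  · simpa using h₀ y
  have hball : Metric.closedBall (0 : E) R ∈ 𝓝 y :=
    Metric.closedBall_mem_nhds_of_mem (mem_ball_zero_iff.2 hy)
  exact absurd (hmin.on_subset (prod_mono_right (Icc_subset_Icc_right hs.2)))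
    (hu.not_isMinOn_add_mul hδ hball ⟨hs₀, hs.2.trans_lt ht.2⟩)

theorem nonneg_of_nonneg_of_le_norm (hu : IsHeatSolution T u) (h₀ : ∀ x, 0 ≤ u x 0) {R : ℝ}
    (hR : ∀ x, R ≤ ‖x‖ → ∀ t ∈ Icc 0 T, 0 ≤ u x t) (x : E) (ht : t ∈ Icc 0 T) : 0 ≤ u x t := by
  have hIco (s : ℝ) (hs : s ∈ Ico 0 T) : 0 ≤ u x s :=
    nonneg_of_forall_pos_nonneg_add_mul fun δ hδ =>
      hu.nonneg_add_mul_of_nonneg_of_le_norm h₀ hR hδ x hs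
  obtain rfl | ht₀ := ht.1.eq_or_lt
  · exact h₀ x
  have hclosure : closure (Ico 0 T) = Icc 0 T := closure_Ico (ht₀.trans_le ht.2).ne
  refine le_on_closure hIco continuousOn_const ?_ (hclosure ▸ ht)
  rw [hclosure]
  exact hu.continuousOn.comp (by fun_prop : ContinuousOn (fun s => (x, s)) (Icc 0 T))
    fun s hs => ⟨trivial, hs⟩

theorem nonneg (hu : IsHeatSolution T u) (h₀ : ∀ x, 0 ≤ u x 0) (x : E) (ht : t ∈ Icc 0 T) :
    0 ≤ u x t := by
  obtain ⟨A, C, -, -, hbound⟩ := hu.exists_abs_le_mul_exp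
  obtain ⟨ψ, hψ, hψ_ge⟩ := exists_isHeatSolution_exp_le (E := E) T (A + 1)
  refine nonneg_of_forall_pos_nonneg_add_mul (b := ψ x t) fun ε hε => ?_
  refine (hu.add (hψ.smul ε)).nonneg_of_nonneg_of_le_norm (R := C / ε) (fun y => ?_)
    (fun y hy s hs => ?_) x ht
  · exact add_nonneg (h₀ y) (mul_nonneg hε.le ((exp_pos _).le.trans (hψ_ge y 0 le_rfl)))
  have hC : C ≤ ε * exp ‖y‖ := by
    rw [div_le_iff₀' hε] at hy
    exact hy.trans (by gcongr; linarith [add_one_le_exp ‖y‖])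
  calc 0 ≤ (ε * exp ‖y‖ - C) * exp (A * ‖y‖) := mul_nonneg (sub_nonneg.2 hC) (exp_pos _).le
    _ = -(C * exp (A * ‖y‖)) + ε * exp ((A + 1) * ‖y‖) := by rw [add_one_mul, exp_add]; ring
    _ ≤ u y s + ε * ψ y s :=
      add_le_add (abs_le.1 (hbound y s hs)).1 (by gcongr; exact hψ_ge y s hs.1)

end IsHeatSolution

theorem sum_harnackForm_nonneg {ι : Type*} [Fintype ι] {F : ι → ι → E → ℝ → ℝ}
    (hF : ∀ i j, IsHeatSolution T (F i j))
    (hpsd : ∀ y (w : ι → ℝ), 0 ≤ ∑ i, ∑ j, F i j y 0 * w i * w j) (ht : t ∈ Ioc 0 T) (e : ι → E)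
    (V x : E) : 0 ≤ ∑ i, ∑ j, harnackForm t (fun y => F i j y t) V x (e i) (e j) := by
  set c := x - (2 * t) • V
  have hC (i j) := contDiff_boostDifference_smul ((hF i j).contDiff_slice ht) V x (e i) (e j)
  set Φ : ℝ → ℝ := fun s => ∑ i, ∑ j, boostDifference c (s • e i) (s • e j) (F i j) x t
  have hΦ : ContDiff ℝ 2 Φ := ContDiff.sum fun i _ => ContDiff.sum fun j _ => hC i j
  have hΦ_nonneg (s : ℝ) : 0 ≤ Φ s := by
    have hsol : IsHeatSolution T (∑ i, ∑ j, boostDifference c (s • e i) (s • e j) (F i j)) :=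
      (heatSolutions E T).sum_mem fun i _ => (heatSolutions E T).sum_mem fun j _ =>
        (hF i j).boostDifference c (s • e i) (s • e j)
    have hinit (y : E) :
        0 ≤ (∑ i, ∑ j, boostDifference c (s • e i) (s • e j) (F i j)) y 0 := by
      simpa only [Finset.sum_apply, boostDifference_apply_zero] using
        hpsd y fun i => exp (inner ℝ (s • e i) (y - c)) - 1
    simpa only [Finset.sum_apply] using hsol.nonneg hinit x (Ioc_subset_Icc_self ht)
  have hΦ_zero : Φ 0 = 0 := by simp [Φ, boostDifference_zero_zero]
  have hmin : IsLocalMin Φ 0 := .of_forall fun s => hΦ_zero.trans_le (hΦ_nonneg s)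
  have hsecond : iteratedDeriv 2 Φ 0 =
      8 * t ^ 2 * ∑ i, ∑ j, harnackForm t (fun y => F i j y t) V x (e i) (e j) := by
    rw [iteratedDeriv_fun_sum fun i _ => (ContDiff.sum fun j _ => hC i j).contDiffAt,
      Finset.mul_sum]
    refine Finset.sum_congr rfl fun i _ => ?_
    rw [iteratedDeriv_fun_sum fun j _ => (hC i j).contDiffAt, Finset.mul_sum]
    exact Finset.sum_congr rfl fun j _ =>
      iteratedDeriv_two_boostDifference_smul ((hF i j).contDiff_slice ht) ht.1.ne' V x _ _
  refine nonneg_of_mul_nonneg_right ?_ (show 0 < 8 * t ^ 2 by have := ht.1; positivity)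
  exact hsecond ▸ iteratedDeriv_two_nonneg_of_isLocalMin hmin hΦ.continuous.continuousAt

section Euclidean

variable {n : ℕ} {f : EuclideanSpace ℝ (Fin n) → ℝ} {u : EuclideanSpace ℝ (Fin n) → ℝ → ℝ}

theorem hess_eq_fderiv_fderiv (hf : ContDiff ℝ 2 f) (i j : Fin n) (x : EuclideanSpace ℝ (Fin n)) :
    hess i j f x =
      fderiv ℝ (fderiv ℝ f) x (EuclideanSpace.single i 1) (EuclideanSpace.single j 1) := by
  have hf' : DifferentiableAt ℝ (fderiv ℝ f) x :=
    (hf.fderiv_right (m := 1) le_rfl).differentiable (by simp) x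
  change fderiv ℝ (fun y => fderiv ℝ f y (EuclideanSpace.single j 1)) x _ = _
  rw [fderiv_clm_apply hf' (differentiableAt_const _)]
  simp

theorem lap_eq_laplacian (hf : ContDiff ℝ 2 f) (x : EuclideanSpace ℝ (Fin n)) :
    lap f x = Δ f x := by
  simp only [laplacian_eq_sum_fderiv_fderiv (EuclideanSpace.basisFun (Fin n) ℝ), lap,
    hess_eq_fderiv_fderiv hf, EuclideanSpace.basisFun_apply]

theorem isHeatSolution_of_bounded (hu : ContDiffOn ℝ 2 (uncurry u) (univ ×ˢ Icc 0 T)) {C : ℝ}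
    (hbdd : ∀ x, ∀ t ∈ Icc 0 T, |u x t| ≤ C)
    (hheat : ∀ x, ∀ t ∈ Ioo 0 T, deriv (u x) t = lap (fun y => u y t) x) :
    IsHeatSolution T u where
  continuousOn := hu.continuousOn
  contDiffOn := hu.mono (prod_mono_right Ioc_subset_Icc_self)
  deriv_eq_laplacian x t ht := by
    have hslice : ContDiff ℝ 2 fun y => u y t := contDiffOn_univ.1 <|
      hu.comp (contDiff_id.prodMk contDiff_const).contDiffOn
        fun y _ => ⟨trivial, Ioo_subset_Icc_self ht⟩
    rw [hheat x t ht, lap_eq_laplacian hslice]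
  isBigO_exp := ⟨0, .of_bound C <| eventually_principal.2 fun p hp => by
    simpa [uncurry_def] using hbdd p.1 p.2 hp.2⟩

theorem harnackForm_single (hf : ContDiff ℝ 2 f) (t : ℝ) (V : Fin n → ℝ)
    (x : EuclideanSpace ℝ (Fin n)) (i j : Fin n) :
    harnackForm t f (WithLp.toLp 2 V) x (EuclideanSpace.single i 1) (EuclideanSpace.single j 1) =
      hess i j f x + pdv j f x * V i + pdv i f x * V j + f x * V i * V j +
        if i = j then f x / (2 * t) else 0 := by
  have hinner : inner ℝ (EuclideanSpace.single i 1 : EuclideanSpace ℝ (Fin n))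
      (EuclideanSpace.single j 1) = if i = j then 1 else 0 := by
    rw [EuclideanSpace.inner_single_left, map_one, one_mul, PiLp.single_apply]
  rw [harnackForm, hinner, ← hess_eq_fderiv_fderiv hf, pdv, pdv, ite_mul, ite_div]
  simp only [EuclideanSpace.inner_single_left, map_one, one_mul, zero_mul, zero_div]
  ring

variable {Υ : EuclideanSpace ℝ (Fin n) → ℝ → Fin n → Fin n → ℝ}

theorem trace_div_two_mul_le (hΥ : ∀ i j, IsHeatSolution T fun y t => Υ y t i j)
    (hpsd : ∀ y (V : Fin n → ℝ), 0 ≤ ∑ i, ∑ j, Υ y 0 i j * V i * V j)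
    (x : EuclideanSpace ℝ (Fin n)) (ht : t ∈ Ioc 0 T) :
    (∑ i, Υ x t i i) / (2 * t) ≤ (∑ i, Υ x t i i) / t := by
  have ht₀ : 0 < t := ht.1
  have hdiag (i : Fin n) (y : EuclideanSpace ℝ (Fin n)) : 0 ≤ Υ y 0 i i := by
    simpa [Pi.single_apply] using hpsd y (Pi.single i 1)
  have htrace : 0 ≤ ∑ i, Υ x t i i :=
    Finset.sum_nonneg fun i _ => (hΥ i i).nonneg (hdiag i) x (Ioc_subset_Icc_self ht)
  gcongr
  linarith

theorem stmt15_general (hΥ : ∀ i j, IsHeatSolution T fun y t => Υ y t i j)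
    (hsymm : ∀ y t i j, Υ y t i j = Υ y t j i)
    (hpsd : ∀ y (V : Fin n → ℝ), 0 ≤ ∑ i, ∑ j, Υ y 0 i j * V i * V j)
    (x : EuclideanSpace ℝ (Fin n)) (ht : t ∈ Ioc 0 T) (V : Fin n → ℝ) :
    0 ≤ (∑ i, ∑ j, hess i j (fun z => Υ z t i j) x)
        + 2 * (∑ i, ∑ j, pdv i (fun z => Υ z t i j) x * V j)
        + (∑ i, ∑ j, Υ x t i j * V i * V j)
        + (∑ i, Υ x t i i) / (2 * t) := by
  have hsum := sum_harnackForm_nonneg hΥ hpsd ht (fun i => EuclideanSpace.single i 1)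
    (WithLp.toLp 2 V) x
  have hswap : ∑ i, ∑ j, pdv j (fun z => Υ z t i j) x * V i =
      ∑ i, ∑ j, pdv i (fun z => Υ z t i j) x * V j := by
    rw [Finset.sum_comm]
    simp only [fun z i j => hsymm z t j i]
  simp only [harnackForm_single ((hΥ _ _).contDiff_slice ht), Finset.sum_add_distrib, hswap,
    Finset.sum_ite_eq, Finset.mem_univ, if_true, ← Finset.sum_div] at hsum
  linarith

end Euclidean

end HeatEquation

/-- Flat static-metric Li–Yau–Hamilton estimate for symmetric tensors evolving
entrywise by the heat equation (Theorem 4 of the paper in the case of ℝⁿ):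
if `Υ(·,0) ≥ 0`, then for all `t ∈ (0,T]` and every vector `V`,
`Σ ∂ᵢ∂ⱼΥᵢⱼ + 2 Σ (∂ᵢΥᵢⱼ)Vⱼ + Σ Υᵢⱼ Vᵢ Vⱼ + (tr Υ)/t ≥ 0`. -/
theorem stmt15 (n : ℕ) (hn : 1 ≤ n) (T : ℝ) (hT : 0 < T)
    (Υ : EuclideanSpace ℝ (Fin n) → ℝ → Fin n → Fin n → ℝ)
    (hsmooth : ∀ i j, ContDiffOn ℝ (⊤ : ℕ∞)
      (fun p : (EuclideanSpace ℝ (Fin n)) × ℝ => Υ p.1 p.2 i j)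
      (Set.univ ×ˢ Set.Icc 0 T))
    (hsymm : ∀ y t i j, Υ y t i j = Υ y t j i)
    (hbdd : ∃ C : ℝ, ∀ (y : EuclideanSpace ℝ (Fin n)), ∀ t ∈ Set.Icc (0 : ℝ) T,
      ∀ i j, |Υ y t i j| ≤ C
        ∧ (∀ k, |pdv k (fun z => Υ z t i j) y| ≤ C)
        ∧ (∀ k l, |hess k l (fun z => Υ z t i j) y| ≤ C))
    (hheat : ∀ (y : EuclideanSpace ℝ (Fin n)), ∀ t ∈ Set.Icc (0 : ℝ) T, ∀ i j,
      deriv (fun s => Υ y s i j) t = lap (fun z => Υ z t i j) y)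
    (hpsd : ∀ (y : EuclideanSpace ℝ (Fin n)) (V : Fin n → ℝ),
      0 ≤ ∑ i, ∑ j, Υ y 0 i j * V i * V j) :
    ∀ (x : EuclideanSpace ℝ (Fin n)), ∀ t ∈ Set.Ioc (0 : ℝ) T, ∀ V : Fin n → ℝ,
      0 ≤ (∑ i, ∑ j, hess i j (fun z => Υ z t i j) x)
          + 2 * (∑ i, ∑ j, pdv i (fun z => Υ z t i j) x * V j)
          + (∑ i, ∑ j, Υ x t i j * V i * V j)
          + (∑ i, Υ x t i i) / t := by
  obtain ⟨C, hC⟩ := hbdd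
  have hΥ (i j) : IsHeatSolution T fun y t => Υ y t i j :=
    isHeatSolution_of_bounded ((hsmooth i j).of_le (by norm_cast))
      (fun y t ht => (hC y t ht i j).1) fun y t ht => hheat y t (Ioo_subset_Icc_self ht) i j
  exact fun x t ht V => (stmt15_general hΥ hsymm hpsd x ht V).trans
    (add_le_add_right (trace_div_two_mul_le hΥ hpsd x ht) _)
end
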